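/- Fix γ ∈ (1,2) and Φ_ℓ, Φ_r ∈ ℝ. There exists a weak solution Φ_ss of the stationary fractional Dirichlet problem 𝕃^γ Φ_ss = 0 on [0,1] with boundary values Φ_ss(0) = Φ_ℓ and Φ_ss(1) = Φ_r; any two weak solutions coincide almost everywhere; and the continuous representative of the weak solution satisfies min(Φ_ℓ, Φ_r) ≤ Φ_ss(u) ≤ max(Φ_ℓ, Φ_r) for every u ∈ [0,1]. -/

import Mathlib

open MeasureTheory Filter ENNReal NNReal

noncomputable section

/-- The normalizing constant `c_γ = (∑_{z∈ℤ, z≠0} |z|^{-(1+γ)})⁻¹`. -/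
def cGamma (γ : ℝ) : ℝ := (∑' z : ℤ, if z = 0 then (0:ℝ) else |(z : ℝ)| ^ (-(1 + γ)))⁻¹

/-- The long-range kernel `p(z) = c_γ |z|^{-(1+γ)}` for `z ≠ 0`, `p(0) = 0`. -/
def pker (γ : ℝ) (z : ℝ) : ℝ := if z = 0 then 0 else cGamma γ * |z| ^ (-(1 + γ))

/-- The fractional inner product `⟨F,G⟩_{γ/2}`. -/
def fracInner (γ : ℝ) (F G : ℝ → ℝ) : ℝ :=
  (cGamma γ / 2) * ∫ u in Set.Icc (0:ℝ) 1, ∫ v in Set.Icc (0:ℝ) 1,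
    (F u - F v) * (G u - G v) * |u - v| ^ (-(1 + γ))

/-- The squared fractional seminorm `‖F‖²_{γ/2}`, as an extended real number. -/
def fracSeminormSq (γ : ℝ) (F : ℝ → ℝ) : ℝ≥0∞ :=
  ∫⁻ u in Set.Icc (0:ℝ) 1, ∫⁻ v in Set.Icc (0:ℝ) 1,
    ENNReal.ofReal ((cGamma γ / 2) * (F u - F v) ^ 2 * |u - v| ^ (-(1 + γ)))

/-- The squared `L²` norm on `[0,1]`, as an extended real number. -/
def l2NormSq (F : ℝ → ℝ) : ℝ≥0∞ :=
  ∫⁻ u in Set.Icc (0:ℝ) 1, ENNReal.ofReal ((F u) ^ 2)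

/-- The squared fractional Sobolev norm `‖F‖²_{H^{γ/2}}`. -/
def sobNormSq (γ : ℝ) (F : ℝ → ℝ) : ℝ≥0∞ := l2NormSq F + fracSeminormSq γ F

/-- Membership in the fractional Sobolev space `H^{γ/2}`. -/
def MemHgamma (γ : ℝ) (F : ℝ → ℝ) : Prop := Measurable F ∧ sobNormSq γ F < ⊤

/-- `F` admits a continuous representative on `[0,1]` taking the values `a` at `0` and
`b` at `1`. -/
def HasBoundaryValues (F : ℝ → ℝ) (a b : ℝ) : Prop :=
  ∃ Fc : ℝ → ℝ, ContinuousOn Fc (Set.Icc 0 1) ∧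
    (∀ᵐ u ∂(volume.restrict (Set.Icc (0:ℝ) 1)), F u = Fc u) ∧ Fc 0 = a ∧ Fc 1 = b

/-- The regional fractional Laplacian on `[0,1]`, as a principal-value limit. -/
def HasFracLapAt (γ : ℝ) (F : ℝ → ℝ) (u L : ℝ) : Prop :=
  Tendsto (fun ε : ℝ =>
      cGamma γ * ∫ v in {v : ℝ | v ∈ Set.Icc (0:ℝ) 1 ∧ ε ≤ abs (u - v)},
        (F v - F u) * |v - u| ^ (-(1 + γ)))
    (nhdsWithin (0:ℝ) (Set.Ioi 0)) (nhds L)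

/-- The regional fractional Laplacian `𝕃^γ F(u)` (junk value `0` when the
principal-value limit does not exist). -/
def fracLap (γ : ℝ) (F : ℝ → ℝ) (u : ℝ) : ℝ :=
  open Classical in
  if h : ∃ L, HasFracLapAt γ F u L then h.choose else 0

/-- Smooth real functions with compact support contained in `(0,1)`. -/
def IsSpatialTest (G : ℝ → ℝ) : Prop :=
  ContDiff ℝ (⊤ : ℕ∞) G ∧ ∃ K : Set ℝ, IsCompact K ∧ K ⊆ Set.Ioo 0 1 ∧ Function.support G ⊆ K

/-- Test functions `C¹` in time and `C^∞` in space, with spatial supports contained in a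
fixed compact subset of `(0,1)`. -/
def IsTestCInf (G : ℝ → ℝ → ℝ) : Prop :=
  (∀ u, ContDiff ℝ 1 fun t => G t u) ∧ (∀ t, ContDiff ℝ (⊤ : ℕ∞) fun u => G t u) ∧
  ∃ K : Set ℝ, IsCompact K ∧ K ⊆ Set.Ioo 0 1 ∧ ∀ t, Function.support (G t) ⊆ K

/-- Functions `C¹` in time and `C²` in space, with spatial supports contained in a fixed
compact subset of `(0,1)`. -/
def IsTestC2 (G : ℝ → ℝ → ℝ) : Prop :=
  (∀ u, ContDiff ℝ 1 fun t => G t u) ∧ (∀ t, ContDiff ℝ 2 fun u => G t u) ∧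
  ∃ K : Set ℝ, IsCompact K ∧ K ⊆ Set.Ioo 0 1 ∧ ∀ t, Function.support (G t) ⊆ K

/-- Weak solution of the stationary problem `𝕃^γ Φss = 0` on `[0,1]` with Dirichlet
boundary values `Φl` at `0` and `Φr` at `1`. -/
def IsStationarySolution (γ Φl Φr : ℝ) (Φss : ℝ → ℝ) : Prop :=
  MemHgamma γ Φss ∧ HasBoundaryValues Φss Φl Φr ∧
  ∀ G : ℝ → ℝ, IsSpatialTest G → (∫ u in Set.Icc (0:ℝ) 1, Φss u * fracLap γ G u) = 0

/-- The weight on the plane. -/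
def wtE (γ : ℝ) (p : ℝ × ℝ) : ℝ≥0∞ := ENNReal.ofReal (|p.1 - p.2| ^ (-(1 + γ)))

def nuM (γ : ℝ) : Measure (ℝ × ℝ) := (volume : Measure (ℝ × ℝ)).withDensity (wtE γ)

def sqI : Set (ℝ × ℝ) := Set.Icc (0:ℝ) 1 ×ˢ Set.Icc (0:ℝ) 1

def muM (γ : ℝ) : Measure (ℝ × ℝ) := (nuM γ).restrict sqI

def DD (F : ℝ → ℝ) (p : ℝ × ℝ) : ℝ := F p.1 - F p.2

def EN (m : Measure (ℝ × ℝ)) (f : ℝ × ℝ → ℝ) : ℝ≥0∞ := ∫⁻ p, ENNReal.ofReal (f p ^ 2) ∂m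

lemma measurable_wtE (γ : ℝ) : Measurable (wtE γ) := by
  unfold wtE; fun_prop

lemma measurableSet_sqI : MeasurableSet sqI := measurableSet_Icc.prod measurableSet_Icc

lemma DD_measurable {F : ℝ → ℝ} (hF : Measurable F) : Measurable (DD F) := by
  unfold DD; fun_prop

lemma memLp_iff_EN {m : Measure (ℝ × ℝ)} {f : ℝ × ℝ → ℝ} (hf : Measurable f) :
    MemLp f 2 m ↔ EN m f < ⊤ := by
  rw [memLp_two_iff_integrable_sq hf.aestronglyMeasurable, EN]
  constructor
  · intro h
    exact (hasFiniteIntegral_iff_ofReal (Eventually.of_forall fun x => sq_nonneg _)).1 h.2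
  · intro h
    refine ⟨(hf.pow_const 2).aestronglyMeasurable, ?_⟩
    exact (hasFiniteIntegral_iff_ofReal (Eventually.of_forall fun x => sq_nonneg _)).2 h

lemma norm_toLp_sq {m : Measure (ℝ × ℝ)} {f : ℝ × ℝ → ℝ} (hf : MemLp f 2 m) :
    ENNReal.ofReal (‖hf.toLp f‖ ^ 2) = EN m f := by
  have h1 : ‖hf.toLp f‖ ^ 2 = ∫ p, f p ^ 2 ∂m := by
    rw [← real_inner_self_eq_norm_sq, L2.inner_def]
    apply integral_congr_ae
    filter_upwards [hf.coeFn_toLp] with p hp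
    rw [hp]
    simp [sq]
  rw [h1, EN, ofReal_integral_eq_lintegral_ofReal hf.integrable_sq
    (Eventually.of_forall fun x => sq_nonneg _)]

lemma lintegral_nuM (γ : ℝ) {f : ℝ × ℝ → ℝ≥0∞} (hf : Measurable f) :
    ∫⁻ p, f p ∂(nuM γ) = ∫⁻ p, wtE γ p * f p := by
  unfold nuM
  rw [lintegral_withDensity_eq_lintegral_mul _ (measurable_wtE γ) hf]
  rfl

lemma lintegral_muM (γ : ℝ) {f : ℝ × ℝ → ℝ≥0∞} (hf : Measurable f) :
    ∫⁻ p, f p ∂(muM γ) = ∫⁻ u in Set.Icc (0:ℝ) 1, ∫⁻ v in Set.Icc (0:ℝ) 1,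
      wtE γ (u, v) * f (u, v) := by
  unfold muM nuM sqI
  rw [restrict_withDensity (measurableSet_Icc.prod measurableSet_Icc),
    lintegral_withDensity_eq_lintegral_mul _ (measurable_wtE γ) hf]
  rw [Measure.volume_eq_prod, ← Measure.prod_restrict, lintegral_prod]
  · rfl
  · exact ((measurable_wtE γ).mul hf).aemeasurable

lemma integrableOn_abs_rpow {r : ℝ} (hr : -1 < r) :
    IntegrableOn (fun s : ℝ => |s| ^ r) (Set.Icc (-1) 1) := by
  have h1 : IntervalIntegrable (fun s : ℝ => |s| ^ r) volume 0 1 := by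
    refine (intervalIntegral.intervalIntegrable_rpow' hr).congr ?_
    intro x hx
    rw [Set.uIoc_of_le zero_le_one] at hx
    simp [abs_of_pos hx.1]
  have h2 : IntervalIntegrable (fun s : ℝ => |s| ^ r) volume (-1) 0 := by
    have := (IntervalIntegrable.iff_comp_neg (f := fun s : ℝ => |s| ^ r) (a := 0) (b := 1)).1 h1
    simpa using this.symm
  have h3 := h2.trans h1
  rw [intervalIntegrable_iff_integrableOn_Icc_of_le (by norm_num)] at h3
  exact h3

def AA (γ : ℝ) : ℝ≥0∞ := ∫⁻ s in Set.Icc (-1:ℝ) 1, ENNReal.ofReal (|s| ^ (1 - γ))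

lemma AA_lt_top {γ : ℝ} (hγ : γ < 2) : AA γ < ⊤ := by
  have := (integrableOn_abs_rpow (r := 1 - γ) (by linarith)).lintegral_lt_top
  exact this

lemma lint_abs_le (γ : ℝ) {u : ℝ} (hu : u ∈ Set.Icc (0:ℝ) 1) :
    ∫⁻ v in Set.Icc (0:ℝ) 1, ENNReal.ofReal (|u - v| ^ (1 - γ)) ≤ AA γ := by
  unfold AA
  rw [← lintegral_indicator measurableSet_Icc, ← lintegral_indicator measurableSet_Icc]
  rw [← lintegral_sub_left_eq_self _ u]
  apply lintegral_mono
  intro v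
  by_cases hv : u - v ∈ Set.Icc (0:ℝ) 1
  · have : v ∈ Set.Icc (-1:ℝ) 1 := by
      constructor <;> linarith [hv.1, hv.2, hu.1, hu.2]
    simp [Set.indicator_of_mem hv, Set.indicator_of_mem this]
  · simp only [Set.indicator_of_notMem hv]
    exact zero_le

lemma EN_lip {γ : ℝ} (hγ : γ < 2) {F : ℝ → ℝ} (hF : Measurable F) {L : ℝ} 
    (h : ∀ u ∈ Set.Icc (0:ℝ) 1, ∀ v ∈ Set.Icc (0:ℝ) 1, |F u - F v| ≤ L * |u - v|) :
    EN (muM γ) (DD F) < ⊤ := by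
  unfold EN
  rw [lintegral_muM γ (by have := DD_measurable hF; fun_prop)]
  have key : ∫⁻ u in Set.Icc (0:ℝ) 1, ∫⁻ v in Set.Icc (0:ℝ) 1,
      wtE γ (u, v) * ENNReal.ofReal (DD F (u, v) ^ 2) ≤
      ∫⁻ u in Set.Icc (0:ℝ) 1, ENNReal.ofReal (L ^ 2) * AA γ := by
    apply setLIntegral_mono' measurableSet_Icc
    intro u hu
    calc _ ≤ ∫⁻ v in Set.Icc (0:ℝ) 1,
        ENNReal.ofReal (L ^ 2) * ENNReal.ofReal (|u - v| ^ (1 - γ)) := by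
          apply setLIntegral_mono' measurableSet_Icc
          intro v hv
          unfold wtE DD
          simp only
          rw [← ENNReal.ofReal_mul (by positivity), ← ENNReal.ofReal_mul (by positivity)]
          apply ENNReal.ofReal_le_ofReal
          rcases eq_or_ne u v with rfl | huv
          · simp; positivity
          · have hp : 0 < |u - v| := abs_pos.2 (sub_ne_zero.2 huv)
            have e : |u - v| ^ (1 - γ) = |u - v| ^ (-(1 + γ)) * |u - v| ^ 2 := by
              rw [← Real.rpow_natCast, ← Real.rpow_add hp]; congr 1; push_cast; ring
            have : (F u - F v) ^ 2 ≤ L ^ 2 * |u - v| ^ 2 := by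
              rw [← mul_pow, ← sq_abs (F u - F v)]
              exact pow_le_pow_left₀ (abs_nonneg _) (h u hu v hv) 2
            rw [e]
            calc _ ≤ |u - v| ^ (-(1 + γ)) * (L ^ 2 * |u - v| ^ 2) := by gcongr
              _ = _ := by ring
      _ ≤ _ := by
          rw [lintegral_const_mul _ (by fun_prop)]
          gcongr
          exact lint_abs_le γ hu
  refine key.trans_lt ?_
  simp
  exact ENNReal.mul_lt_top (by simp) (AA_lt_top hγ)

lemma cGamma_pos {γ : ℝ} (hγ : 1 < γ) : 0 < cGamma γ := by
  unfold cGamma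
  have hs : Summable (fun z : ℤ => if z = 0 then (0:ℝ) else |(z : ℝ)| ^ (-(1 + γ))) := by
    refine (Real.summable_abs_int_rpow (b := 1 + γ) (by linarith)).of_nonneg_of_le ?_ ?_
    · intro z; split_ifs <;> positivity
    · intro z; split_ifs <;> [positivity; exact le_rfl]
  apply inv_pos.2
  refine hs.tsum_pos ?_ 1 ?_
  · intro z; split_ifs <;> positivity
  · simp

lemma fracSeminormSq_eq {γ : ℝ} (hγ : 1 < γ) {F : ℝ → ℝ} (hF : Measurable F) :
    fracSeminormSq γ F = ENNReal.ofReal (cGamma γ / 2) * EN (muM γ) (DD F) := by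
  have hm := DD_measurable hF
  have hw := measurable_wtE γ
  have hc := cGamma_pos hγ
  unfold fracSeminormSq EN
  rw [lintegral_muM γ (by fun_prop), ← lintegral_const_mul' _ _ (by simp)]
  congr 1
  ext u
  rw [← lintegral_const_mul' _ _ (by simp)]
  congr 1
  ext v
  unfold wtE DD
  simp only
  rw [← ENNReal.ofReal_mul (by positivity), ← ENNReal.ofReal_mul (by positivity)]
  congr 1; ring

lemma fracSeminormSq_lt_iff {γ : ℝ} (hγ : 1 < γ) {F : ℝ → ℝ} (hF : Measurable F) :
    fracSeminormSq γ F < ⊤ ↔ EN (muM γ) (DD F) < ⊤ := by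
  have hc := cGamma_pos hγ
  rw [fracSeminormSq_eq hγ hF]
  constructor
  · intro h
    by_contra h2
    rw [not_lt, top_le_iff] at h2
    rw [h2, ENNReal.mul_top (by simpa using hc)] at h
    exact lt_irrefl _ h
  · intro h
    exact ENNReal.mul_lt_top (by simp) h

lemma lint_scale {f : ℝ → ℝ≥0∞} (hf : Measurable f) {x q : ℝ} (hx : x ∈ Set.Icc (0:ℝ) 1)
    (hq : 0 < q) (hq1 : q ≤ 1) :
    ∫⁻ s in Set.Icc (0:ℝ) 1, f (x + q * (s - x)) ≤
      ENNReal.ofReal q⁻¹ * ∫⁻ u in Set.Icc (0:ℝ) 1, f u := by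
  rw [← lintegral_indicator measurableSet_Icc, ← lintegral_indicator measurableSet_Icc]
  set g : ℝ → ℝ≥0∞ := (Set.Icc (0:ℝ) 1).indicator f with hg
  have hgm : Measurable g := hf.indicator measurableSet_Icc
  have h1 : ∫⁻ s, (Set.Icc (0:ℝ) 1).indicator (fun s => f (x + q * (s - x))) s ≤
      ∫⁻ s, g (q * s + (1 - q) * x) := by
    apply lintegral_mono
    intro s
    by_cases hs : s ∈ Set.Icc (0:ℝ) 1
    · have : q * s + (1 - q) * x ∈ Set.Icc (0:ℝ) 1 := by
        constructor
        · have := mul_nonneg hq.le hs.1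
          have := mul_nonneg (sub_nonneg.2 hq1) hx.1
          linarith
        · have := mul_le_mul_of_nonneg_left hs.2 hq.le
          have := mul_le_mul_of_nonneg_left hx.2 (sub_nonneg.2 hq1)
          linarith
      simp only [Set.indicator_of_mem hs, hg, Set.indicator_of_mem this]
      apply le_of_eq; congr 1; ring
    · simp [Set.indicator_of_notMem hs]
  refine h1.trans (le_of_eq ?_)
  have h2 : ∫⁻ s, g (q * s + (1 - q) * x) =
      ∫⁻ y, g (y + (1 - q) * x) ∂(Measure.map (q * ·) volume) := by
    rw [lintegral_map (by fun_prop) (by fun_prop)]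
  rw [h2, Real.map_volume_mul_left hq.ne', lintegral_smul_measure, abs_of_pos (inv_pos.2 hq),
    lintegral_add_right_eq_self]
  rfl

lemma sq_integral_le_prob {X : Type*} [MeasurableSpace X] {m : Measure X} [IsProbabilityMeasure m]
    {f : X → ℝ} (hf : Integrable f m) (hf2 : Integrable (fun x => f x ^ 2) m) :
    (∫ x, f x ∂m) ^ 2 ≤ ∫ x, f x ^ 2 ∂m := by
  set a := ∫ x, f x ∂m with ha
  have h0 : 0 ≤ ∫ x, (f x - a) ^ 2 ∂m := integral_nonneg fun x => sq_nonneg _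
  have h1 : ∫ x, (f x - a) ^ 2 ∂m = ∫ x, f x ^ 2 ∂m - a ^ 2 := by
    have : ∀ x, (f x - a) ^ 2 = f x ^ 2 - (2 * a * f x - a ^ 2) := fun x => by ring
    simp_rw [this]
    have hi : Integrable (fun x => 2 * a * f x - a ^ 2) m :=
      (hf.const_mul _).sub (integrable_const _)
    rw [integral_sub hf2 hi, integral_sub (hf.const_mul _) (integrable_const _), integral_const_mul]
    simp [← ha]
    ring
  linarith

instance : IsProbabilityMeasure (volume.restrict (Set.Icc (0:ℝ) 1)) := ⟨by simp⟩

lemma avg_diff {γ : ℝ} (hγ : γ ∈ Set.Ioo (1:ℝ) 2) {F : ℝ → ℝ} (hF : Continuous F)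
    {x q : ℝ} (hx : x ∈ Set.Icc (0:ℝ) 1) (hq : 0 < q) (hq1 : q ≤ 1) :
    ENNReal.ofReal (((∫ s in Set.Icc (0:ℝ) 1, F (x + q * (s - x))) -
      ∫ t in Set.Icc (0:ℝ) 1, F (x + (q / 2) * (t - x))) ^ 2) ≤
    ENNReal.ofReal (2 * (2 : ℝ) ^ (1 + γ) * q ^ (γ - 1)) * EN (muM γ) (DD F) := by
  set P : Measure ℝ := volume.restrict (Set.Icc (0:ℝ) 1) with hP
  set f : ℝ → ℝ := fun s => F (x + q * (s - x)) with hf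
  set g : ℝ → ℝ := fun t => F (x + (q / 2) * (t - x)) with hg
  have hfc : Continuous f := by fun_prop
  have hgc : Continuous g := by fun_prop
  have hint : ∀ h : ℝ × ℝ → ℝ, Continuous h → Integrable h (P.prod P) := by
    intro h hh
    rw [hP, Measure.prod_restrict]
    exact hh.continuousOn.integrableOn_compact (isCompact_Icc.prod isCompact_Icc)
  have hi1 : Integrable f P := hfc.continuousOn.integrableOn_compact isCompact_Icc
  have hi2 : Integrable g P := hgc.continuousOn.integrableOn_compact isCompact_Icc
  have e1 : (∫ s, f s ∂P) - ∫ t, g t ∂P = ∫ p, (f p.1 - g p.2) ∂(P.prod P) := by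
    rw [integral_sub (hint _ (by fun_prop)) (hint _ (by fun_prop)), integral_fun_fst,
      integral_fun_snd]
    simp
  rw [e1]
  calc ENNReal.ofReal ((∫ p, (f p.1 - g p.2) ∂(P.prod P)) ^ 2)
      ≤ ENNReal.ofReal (∫ p, (f p.1 - g p.2) ^ 2 ∂(P.prod P)) := by
        apply ENNReal.ofReal_le_ofReal
        exact sq_integral_le_prob (hint _ (by fun_prop)) (hint _ (by fun_prop))
    _ = ∫⁻ p, ENNReal.ofReal ((f p.1 - g p.2) ^ 2) ∂(P.prod P) :=
        ofReal_integral_eq_lintegral_ofReal (hint _ (by fun_prop))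
          (Eventually.of_forall fun x => sq_nonneg _)
    _ = ∫⁻ s, ∫⁻ t, ENNReal.ofReal ((f s - g t) ^ 2) ∂P ∂P := by
        rw [lintegral_prod _ (by fun_prop)]
    _ ≤ ∫⁻ s, ∫⁻ t, ENNReal.ofReal ((2 * q) ^ (1 + γ)) * (wtE γ (x + q * (s - x),
          x + (q / 2) * (t - x)) * ENNReal.ofReal (DD F (x + q * (s - x),
          x + (q / 2) * (t - x)) ^ 2)) ∂P ∂P := by
        apply setLIntegral_mono' measurableSet_Icc
        intro s hs
        apply setLIntegral_mono' measurableSet_Icc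
        intro t ht
        unfold wtE DD
        simp only [hf, hg]
        rw [← ENNReal.ofReal_mul (by positivity), ← ENNReal.ofReal_mul (by positivity)]
        apply ENNReal.ofReal_le_ofReal
        set u := x + q * (s - x) with hu
        set v := x + (q / 2) * (t - x) with hv
        rcases eq_or_ne u v with huv | huv
        · rw [huv]; simp
        · have hp : 0 < |u - v| := abs_pos.2 (sub_ne_zero.2 huv)
          have hle : |u - v| ≤ 2 * q := by
            have : u - v = q * ((s - x) - (t - x) / 2) := by rw [hu, hv]; ring
            rw [this, abs_mul, abs_of_pos hq, mul_comm]
            gcongr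
            rw [abs_le]
            constructor <;> linarith [hs.1, hs.2, ht.1, ht.2, hx.1, hx.2]
          have h1 : 1 ≤ (2 * q) ^ (1 + γ) * |u - v| ^ (-(1 + γ)) := by
            rw [Real.rpow_neg hp.le, ← div_eq_mul_inv, le_div_iff₀ (by positivity), one_mul]
            exact Real.rpow_le_rpow hp.le hle (by linarith [hγ.1])
          rw [← mul_assoc]
          exact le_mul_of_one_le_left (sq_nonneg _) h1
    _ ≤ ENNReal.ofReal ((2 * q) ^ (1 + γ)) * (ENNReal.ofReal q⁻¹ * (ENNReal.ofReal (q / 2)⁻¹ *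
          EN (muM γ) (DD F))) := by
        have hDm := DD_measurable hF.measurable
        have hwm := measurable_wtE γ
        set Q : ℝ → ℝ → ℝ≥0∞ := fun u v => wtE γ (u, v) * ENNReal.ofReal (DD F (u, v) ^ 2) with hQ
        have hQm : Measurable (fun p : ℝ × ℝ => Q p.1 p.2) := by
          simp only [hQ]; fun_prop
        have hE : EN (muM γ) (DD F) = ∫⁻ u, ∫⁻ v, Q u v ∂P ∂P := by
          unfold EN
          rw [lintegral_muM γ (by fun_prop)]
        rw [hE]
        simp_rw [lintegral_const_mul' _ _ ENNReal.ofReal_ne_top]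
        gcongr
        rw [← lintegral_const_mul' (ENNReal.ofReal (q / 2)⁻¹) _ ENNReal.ofReal_ne_top]
        calc _ ≤ ∫⁻ s, (fun u => ENNReal.ofReal (q / 2)⁻¹ * ∫⁻ v, Q u v ∂P) (x + q * (s - x)) ∂P := by
              apply lintegral_mono
              intro s
              exact lint_scale (f := fun v => Q (x + q * (s - x)) v) (by fun_prop) hx (by positivity)
                (by linarith)
          _ ≤ _ := by
              refine lint_scale ?_ hx hq hq1
              exact (hQm.lintegral_prod_right').const_mul _
    _ = _ := by
        rw [← mul_assoc, ← mul_assoc, ← ENNReal.ofReal_mul (by positivity),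
          ← ENNReal.ofReal_mul (by positivity)]
        congr 2
        rw [Real.mul_rpow (by norm_num) hq.le]
        have : q ^ (1 + γ) = q ^ (γ - 1) * q ^ 2 := by
          rw [← Real.rpow_natCast, ← Real.rpow_add hq]; congr 1; push_cast; ring
        rw [this]
        field_simp

lemma sup_bound {γ : ℝ} (hγ : γ ∈ Set.Ioo (1:ℝ) 2) : ∃ C : ℝ, 0 ≤ C ∧ ∀ F : ℝ → ℝ, Continuous F →
    ∀ h : MemLp (DD F) 2 (muM γ), ∀ x ∈ Set.Icc (0:ℝ) 1, ∀ y ∈ Set.Icc (0:ℝ) 1,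
    |F x - F y| ≤ C * ‖h.toLp (DD F)‖ := by
  set r : ℝ := (2:ℝ)⁻¹ ^ ((γ - 1) / 2) with hr
  have hr0 : 0 < r := by positivity
  have hr1 : r < 1 := Real.rpow_lt_one (by norm_num) (by norm_num) (by linarith [hγ.1])
  set K : ℝ := Real.sqrt (2 * (2 : ℝ) ^ (1 + γ)) with hK
  refine ⟨2 * (K / (1 - r)), by have := sub_pos.2 hr1; positivity, ?_⟩
  intro F hF h
  set N := ‖h.toLp (DD F)‖ with hN
  have main : ∀ x ∈ Set.Icc (0:ℝ) 1, dist (∫ s in Set.Icc (0:ℝ) 1, F s) (F x) ≤ K * N / (1 - r) := by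
    intro x hx
    set A : ℕ → ℝ := fun k => ∫ s in Set.Icc (0:ℝ) 1, F (x + (2:ℝ)⁻¹ ^ k * (s - x)) with hA
    have hA0 : A 0 = ∫ s in Set.Icc (0:ℝ) 1, F s := by simp [hA]
    have hstep : ∀ k, dist (A k) (A (k + 1)) ≤ K * N * r ^ k := by
      intro k
      have hh := avg_diff hγ hF hx (q := (2:ℝ)⁻¹ ^ k) (by positivity)
        (pow_le_one₀ (by norm_num) (by norm_num))
      rw [← norm_toLp_sq h, ← ENNReal.ofReal_mul (by positivity),
        ENNReal.ofReal_le_ofReal_iff (by positivity)] at hh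
      have e : (2:ℝ)⁻¹ ^ k / 2 = (2:ℝ)⁻¹ ^ (k + 1) := by rw [pow_succ]; ring
      rw [e] at hh
      have e2 : ((2:ℝ)⁻¹ ^ k) ^ (γ - 1) = (r ^ k) ^ 2 := by
        rw [hr, ← Real.rpow_natCast, ← Real.rpow_natCast, ← Real.rpow_natCast, ← Real.rpow_mul (by positivity),
          ← Real.rpow_mul (by positivity), ← Real.rpow_mul (by positivity)]
        congr 1; push_cast; ring
      rw [e2] at hh
      have hK2 : K ^ 2 = 2 * (2 : ℝ) ^ (1 + γ) := Real.sq_sqrt (by positivity)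
      rw [← hK2] at hh
      rw [Real.dist_eq]
      apply abs_le_of_sq_le_sq _ (by positivity)
      calc _ ≤ _ := hh
        _ = _ := by ring
    have hlim : Tendsto A atTop (nhds (F x)) := by
      have hFx : F x = ∫ s in Set.Icc (0:ℝ) 1, F x := by simp
      rw [hFx]
      obtain ⟨M, hM⟩ := (isCompact_Icc (a := (0:ℝ)) (b := 1)).exists_bound_of_continuousOn hF.continuousOn
      refine tendsto_integral_of_dominated_convergence (fun _ => M) ?_ (integrable_const _) ?_ ?_
      · intro n; exact (by fun_prop : Continuous _).aestronglyMeasurable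
      · intro n
        filter_upwards [ae_restrict_mem measurableSet_Icc] with s hs
        apply hM
        have h1 : (0:ℝ) < (2:ℝ)⁻¹ ^ n := by positivity
        have h2 : (2:ℝ)⁻¹ ^ n ≤ 1 := pow_le_one₀ (by norm_num) (by norm_num)
        constructor
        · nlinarith [mul_nonneg h1.le hs.1, mul_nonneg (sub_nonneg.2 h2) hx.1]
        · nlinarith [mul_le_mul_of_nonneg_left hs.2 h1.le, mul_le_mul_of_nonneg_left hx.2 (sub_nonneg.2 h2)]
      · refine Eventually.of_forall fun s => ?_
        have h1 : Tendsto (fun n : ℕ => x + (2:ℝ)⁻¹ ^ n * (s - x)) atTop (nhds (x + 0 * (s - x))) :=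
          ((_root_.tendsto_pow_atTop_nhds_zero_of_lt_one (by norm_num) (by norm_num)).mul_const _).const_add _
        rw [zero_mul, add_zero] at h1
        exact (hF.tendsto x).comp h1
    rw [← hA0]
    exact dist_le_of_le_geometric_of_tendsto₀ r (K * N) hr1 hstep hlim
  intro x hx y hy
  rw [← Real.dist_eq]
  calc dist (F x) (F y) ≤ _ := dist_triangle_left _ _ (∫ s in Set.Icc (0:ℝ) 1, F s)
    _ ≤ K * N / (1 - r) + K * N / (1 - r) := add_le_add (main x hx) (main y hy)
    _ = _ := by ring

lemma strong_of_bound {m : Measure (ℝ × ℝ)} {f : ℕ → ℝ × ℝ → ℝ} {F : ℝ × ℝ → ℝ}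
    (hf : ∀ n, Measurable (f n)) (hF : Measurable F)
    (hpt : ∀ p, Tendsto (fun n => f n p) atTop (nhds (F p)))
    (hb : ∀ n, EN m (f n) ≤ EN m F) (hfin : EN m F < ⊤) :
    Tendsto (fun n => EN m (f n - F)) atTop (nhds 0) := by
  have hpar : ∀ n, EN m (f n - F) + EN m (f n + F) ≤ 4 * EN m F := by
    intro n
    have hfn := hf n
    calc EN m (f n - F) + EN m (f n + F) = 2 * EN m (f n) + 2 * EN m F := by
          unfold EN
          rw [← lintegral_add_left (by simp only [Pi.sub_apply]; fun_prop), ← lintegral_const_mul' _ _ (by simp),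
            ← lintegral_const_mul' _ _ (by simp), ← lintegral_add_left (by fun_prop)]
          congr 1; ext p
          rw [← ENNReal.ofReal_add (sq_nonneg _) (sq_nonneg _),
            show (2:ℝ≥0∞) = ENNReal.ofReal 2 by simp,
            ← ENNReal.ofReal_mul (by norm_num), ← ENNReal.ofReal_mul (by norm_num),
            ← ENNReal.ofReal_add (by positivity) (by positivity)]
          congr 1
          simp only [Pi.sub_apply, Pi.add_apply]; ring
      _ ≤ 2 * EN m F + 2 * EN m F := by gcongr; exact hb n
      _ = _ := by ring
  have hle : ∀ n, EN m (f n - F) ≤ 4 * EN m F - EN m (f n + F) := by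
    intro n
    refine ENNReal.le_sub_of_add_le_right ?_ (hpar n)
    exact ((le_add_self).trans (hpar n)).trans_lt (ENNReal.mul_lt_top (by simp) hfin) |>.ne
  have hfatou : 4 * EN m F ≤ liminf (fun n => EN m (f n + F)) atTop := by
    have h1 : 4 * EN m F = ∫⁻ p, liminf (fun n => ENNReal.ofReal ((f n + F) p ^ 2)) atTop ∂m := by
      unfold EN
      rw [← lintegral_const_mul' _ _ (by simp)]
      congr 1; ext p
      have : Tendsto (fun n => ENNReal.ofReal ((f n + F) p ^ 2)) atTop
          (nhds (ENNReal.ofReal ((F p + F p) ^ 2))) :=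
        ENNReal.tendsto_ofReal (((hpt p).add_const _).pow 2)
      rw [this.liminf_eq, show (4:ℝ≥0∞) = ENNReal.ofReal 4 by simp,
        ← ENNReal.ofReal_mul (by norm_num)]
      congr 1; ring
    rw [h1]
    apply lintegral_liminf_le
    intro n
    have hfn := hf n
    simp only [Pi.add_apply]
    fun_prop
  refine tendsto_of_le_liminf_of_limsup_le bot_le ?_
  calc limsup (fun n => EN m (f n - F)) atTop
      ≤ limsup (fun n => 4 * EN m F - EN m (f n + F)) atTop :=
        limsup_le_limsup (Eventually.of_forall hle)
    _ = 4 * EN m F - liminf (fun n => EN m (f n + F)) atTop :=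
        ENNReal.limsup_const_sub _ _ (ENNReal.mul_lt_top (by simp) hfin).ne
    _ ≤ 0 := by rw [tsub_eq_zero_of_le hfatou]

lemma IsSpatialTest.hcs {G : ℝ → ℝ} (hG : IsSpatialTest G) : HasCompactSupport G := by
  obtain ⟨_, K, hK, _, hs⟩ := hG
  exact HasCompactSupport.intro hK fun x hx => by
    by_contra h; exact hx (hs h)

lemma IsSpatialTest.zero_out {G : ℝ → ℝ} (hG : IsSpatialTest G) {x : ℝ} (hx : x ∉ Set.Ioo (0:ℝ) 1) :
    G x = 0 := by
  obtain ⟨_, K, hK, hK2, hs⟩ := hG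
  by_contra h; exact hx (hK2 (hs h))

lemma IsSpatialTest.memLp {γ : ℝ} (hγ : γ < 2) {G : ℝ → ℝ} (hG : IsSpatialTest G) :
    MemLp (DD G) 2 (muM γ) := by
  have hm : Measurable G := hG.1.continuous.measurable
  rw [memLp_iff_EN (DD_measurable hm)]
  obtain ⟨C, hC⟩ := hG.1.lipschitzWith_of_hasCompactSupport hG.hcs (by simp)
  refine EN_lip hγ hm (L := C) ?_
  intro u _ v _
  have := hC.dist_le_mul u v
  simpa [Real.dist_eq] using this

def TT (γ : ℝ) : Submodule ℝ (Lp ℝ 2 (muM γ)) where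
  carrier := {f | ∃ G, IsSpatialTest G ∧ f =ᵐ[muM γ] DD G}
  add_mem' := by
    rintro f g ⟨F, ⟨hF, K, hK, hK1, hK2⟩, hfF⟩ ⟨G, ⟨hG, J, hJ, hJ1, hJ2⟩, hgG⟩
    refine ⟨F + G, ⟨hF.add hG, K ∪ J, hK.union hJ, Set.union_subset hK1 hJ1, ?_⟩, ?_⟩
    · exact (Function.support_add _ _).trans (Set.union_subset_union hK2 hJ2)
    · filter_upwards [Lp.coeFn_add f g, hfF, hgG] with p h1 h2 h3
      rw [h1, Pi.add_apply, h2, h3]; simp only [DD, Pi.add_apply]; ring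
  zero_mem' := by
    refine ⟨0, ⟨contDiff_const, ∅, isCompact_empty, by simp, by simp⟩, ?_⟩
    filter_upwards [Lp.coeFn_zero ℝ 2 (muM γ)] with p h1
    rw [h1]; simp [DD]
  smul_mem' := by
    rintro c f ⟨F, ⟨hF, K, hK, hK1, hK2⟩, hfF⟩
    refine ⟨c • F, ⟨contDiff_const.smul hF, K, hK, hK1, ?_⟩, ?_⟩
    · exact (Function.support_const_smul_subset c F).trans hK2
    · filter_upwards [Lp.coeFn_smul c f, hfF] with p h1 h2
      rw [h1, Pi.smul_apply, h2]; simp only [DD, Pi.smul_apply, smul_eq_mul]; ring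

def KK (γ : ℝ) : Submodule ℝ (Lp ℝ 2 (muM γ)) := (TT γ).topologicalClosure

instance (γ : ℝ) : CompleteSpace (KK γ) := by
  unfold KK; infer_instance

lemma test_mem_KK {γ : ℝ} {G : ℝ → ℝ} (hG : IsSpatialTest G) (h : MemLp (DD G) 2 (muM γ)) :
    h.toLp (DD G) ∈ KK γ :=
  (TT γ).le_topologicalClosure ⟨G, hG, h.coeFn_toLp⟩

lemma mem_KK_of_tendsto {γ : ℝ} {f : ℕ → ℝ → ℝ} {F : ℝ → ℝ}
    (hf : ∀ n, MemLp (DD (f n)) 2 (muM γ)) (hF : MemLp (DD F) 2 (muM γ))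
    (hK : ∀ n, (hf n).toLp _ ∈ KK γ)
    (ht : Tendsto (fun n => EN (muM γ) (DD (f n) - DD F)) atTop (nhds 0)) :
    hF.toLp _ ∈ KK γ := by
  have hcl : IsClosed (KK γ : Set (Lp ℝ 2 (muM γ))) := (TT γ).isClosed_topologicalClosure
  refine hcl.mem_of_tendsto (f := fun n => (hf n).toLp _) (b := atTop) ?_ (Eventually.of_forall hK)
  rw [tendsto_iff_norm_sub_tendsto_zero]
  have h1 : ∀ n, ‖(hf n).toLp _ - hF.toLp _‖ = Real.sqrt ((EN (muM γ) (DD (f n) - DD F)).toReal) := by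
    intro n
    rw [← MemLp.toLp_sub, ← norm_toLp_sq ((hf n).sub hF), ENNReal.toReal_ofReal (by positivity),
      Real.sqrt_sq (by positivity)]
  simp_rw [h1]
  have h2 := (ENNReal.tendsto_toReal (by simp)).comp ht
  have h3 := (Real.continuous_sqrt.tendsto _).comp h2
  simp only [ENNReal.toReal_zero, Real.sqrt_zero] at h3
  exact h3

lemma EN_mu_le_nu (γ : ℝ) (f : ℝ × ℝ → ℝ) : EN (muM γ) f ≤ EN (nuM γ) f :=
  lintegral_mono' Measure.restrict_le_self le_rfl

/-- Finite energy on the whole plane for compactly supported functions. -/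
lemma EN_nu_fin {γ : ℝ} (hγ : γ ∈ Set.Ioo (1:ℝ) 2) {h : ℝ → ℝ} (hc : Continuous h) {K : Set ℝ}
    {δ : ℝ} (hδ : 0 < δ) (hK : IsCompact K)
    (hK1 : Metric.cthickening δ K ⊆ Set.Ioo 0 1) (hs : Function.support h ⊆ K)
    (hfin : EN (muM γ) (DD h) < ⊤) : EN (nuM γ) (DD h) < ⊤ := by
  have hDm := DD_measurable hc.measurable
  have hwm := measurable_wtE γ
  have hsplit : EN (nuM γ) (DD h) = EN (muM γ) (DD h) +
      ∫⁻ p in sqIᶜ, ENNReal.ofReal (DD h p ^ 2) ∂(nuM γ) := by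
    unfold EN muM
    rw [lintegral_add_compl _ measurableSet_sqI]
  rw [hsplit]
  refine ENNReal.add_lt_top.2 ⟨hfin, ?_⟩
  obtain ⟨M, hM⟩ := (HasCompactSupport.intro hK fun x hx => by
    by_contra h'; exact hx (hs h') : HasCompactSupport h).exists_bound_of_continuous hc
  set k : ℝ → ℝ≥0∞ := fun s => ENNReal.ofReal ((1 + ‖s‖) ^ (-(1 + γ))) with hk
  have hkm : Measurable k := by fun_prop
  have hkfin : ∫⁻ s, k s < ⊤ :=
    (integrable_one_add_norm (E := ℝ) (μ := volume) (r := 1 + γ)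
      (by simp; linarith [hγ.1])).lintegral_lt_top
  set B : ℝ≥0∞ := ENNReal.ofReal ((2 * M) ^ 2 * (1 + 1 / δ) ^ (1 + γ)) with hB
  have hfar : ∀ u ∈ K, ∀ v ∉ Set.Icc (0:ℝ) 1, δ ≤ |u - v| := by
    intro u hu v hv
    by_contra hlt
    push Not at hlt
    apply hv
    apply Set.Ioo_subset_Icc_self
    apply hK1
    apply Metric.mem_cthickening_of_dist_le v u δ K hu
    rw [Real.dist_eq, abs_sub_comm]; exact hlt.le
  have hKI : K ⊆ Set.Icc (0:ℝ) 1 :=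
    ((Metric.self_subset_cthickening K).trans hK1).trans Set.Ioo_subset_Icc_self
  have hpt : ∀ p : ℝ × ℝ, p ∉ sqI → wtE γ p * ENNReal.ofReal (DD h p ^ 2) ≤
      B * ((Set.Icc (0:ℝ) 1).indicator 1 p.1 * k (p.1 - p.2) +
        (Set.Icc (0:ℝ) 1).indicator 1 p.2 * k (p.1 - p.2)) := by
    rintro ⟨u, v⟩ hp
    have base : δ ≤ |u - v| → wtE γ (u, v) * ENNReal.ofReal (DD h (u, v) ^ 2) ≤ B * k (u - v) := by
      intro hd
      simp only [wtE, DD, hB, hk]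
      rw [← ENNReal.ofReal_mul (by positivity), ← ENNReal.ofReal_mul (by positivity)]
      apply ENNReal.ofReal_le_ofReal
      have hpos : 0 < |u - v| := hδ.trans_le hd
      have h1 : (h u - h v) ^ 2 ≤ (2 * M) ^ 2 := by
        rw [← sq_abs]
        apply pow_le_pow_left₀ (abs_nonneg _)
        calc |h u - h v| ≤ |h u| + |h v| := abs_sub _ _
          _ ≤ M + M := add_le_add (hM u) (hM v)
          _ = _ := by ring
      have h2 : |u - v| ^ (-(1 + γ)) ≤ (1 + 1 / δ) ^ (1 + γ) * (1 + ‖u - v‖) ^ (-(1 + γ)) := by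
        rw [Real.norm_eq_abs, Real.rpow_neg hpos.le, Real.rpow_neg (by positivity),
          ← div_eq_mul_inv, le_div_iff₀ (by positivity), ← div_eq_inv_mul,
          div_le_iff₀ (by positivity), ← Real.mul_rpow (by positivity) (by positivity)]
        apply Real.rpow_le_rpow (by positivity) _ (by linarith [hγ.1])
        have : 1 ≤ 1 / δ * |u - v| := by
          rw [one_div, inv_mul_eq_div, le_div_iff₀ hδ, one_mul]; exact hd
        linarith
      calc _ ≤ ((1 + 1 / δ) ^ (1 + γ) * (1 + ‖u - v‖) ^ (-(1 + γ))) * (2 * M) ^ 2 := by gcongr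
        _ = _ := by ring
    by_cases hu : h u = 0
    · by_cases hv : h v = 0
      · simp [DD, hu, hv]
      · have hvK : v ∈ K := hs hv
        have hu' : u ∉ Set.Icc (0:ℝ) 1 := fun hu' => hp ⟨hu', hKI hvK⟩
        have := base (by rw [abs_sub_comm]; exact hfar v hvK u hu')
        simpa [Set.indicator_of_mem (hKI hvK), Set.indicator_of_notMem hu'] using this
    · have huK : u ∈ K := hs hu
      have hv' : v ∉ Set.Icc (0:ℝ) 1 := fun hv' => hp ⟨hKI huK, hv'⟩
      have := base (hfar u huK v hv')
      simpa [Set.indicator_of_mem (hKI huK), Set.indicator_of_notMem hv'] using this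
  have hI : ∫⁻ x : ℝ, (Set.Icc (0:ℝ) 1).indicator (1 : ℝ → ℝ≥0∞) x = 1 := by
    rw [lintegral_indicator_one measurableSet_Icc]; simp
  have hIm : Measurable ((Set.Icc (0:ℝ) 1).indicator (1 : ℝ → ℝ≥0∞)) :=
    measurable_one.indicator measurableSet_Icc
  have i1 : ∫⁻ p : ℝ × ℝ, (Set.Icc (0:ℝ) 1).indicator 1 p.1 * k (p.1 - p.2) = ∫⁻ s, k s := by
    rw [Measure.volume_eq_prod, lintegral_prod _ (by fun_prop)]
    simp only
    have : ∀ u : ℝ, ∫⁻ v, (Set.Icc (0:ℝ) 1).indicator 1 u * k (u - v) =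
        (Set.Icc (0:ℝ) 1).indicator 1 u * ∫⁻ s, k s := by
      intro u
      rw [lintegral_const_mul _ (by fun_prop), lintegral_sub_left_eq_self]
    simp_rw [this]
    rw [lintegral_mul_const _ hIm, hI, one_mul]
  have i2 : ∫⁻ p : ℝ × ℝ, (Set.Icc (0:ℝ) 1).indicator 1 p.2 * k (p.1 - p.2) = ∫⁻ s, k s := by
    rw [Measure.volume_eq_prod, lintegral_prod_symm _ (by fun_prop)]
    simp only
    have : ∀ v : ℝ, ∫⁻ u, (Set.Icc (0:ℝ) 1).indicator 1 v * k (u - v) =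
        (Set.Icc (0:ℝ) 1).indicator 1 v * ∫⁻ s, k s := by
      intro u
      rw [lintegral_const_mul _ (by fun_prop), lintegral_sub_right_eq_self]
    simp_rw [this]
    rw [lintegral_mul_const _ hIm, hI, one_mul]
  calc ∫⁻ p in sqIᶜ, ENNReal.ofReal (DD h p ^ 2) ∂(nuM γ)
      = ∫⁻ p in sqIᶜ, wtE γ p * ENNReal.ofReal (DD h p ^ 2) := by
        unfold nuM
        rw [restrict_withDensity measurableSet_sqI.compl,
          lintegral_withDensity_eq_lintegral_mul _ hwm (by fun_prop)]
        rfl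
    _ ≤ ∫⁻ p in sqIᶜ, B * ((Set.Icc (0:ℝ) 1).indicator 1 p.1 * k (p.1 - p.2) +
        (Set.Icc (0:ℝ) 1).indicator 1 p.2 * k (p.1 - p.2)) :=
        setLIntegral_mono' measurableSet_sqI.compl fun p hp => hpt p hp
    _ ≤ ∫⁻ p : ℝ × ℝ, B * ((Set.Icc (0:ℝ) 1).indicator 1 p.1 * k (p.1 - p.2) +
        (Set.Icc (0:ℝ) 1).indicator 1 p.2 * k (p.1 - p.2)) := setLIntegral_le_lintegral _ _
    _ = B * ((∫⁻ s, k s) + ∫⁻ s, k s) := by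
        rw [lintegral_const_mul _ (by fun_prop), lintegral_add_left (by fun_prop), i1, i2]
    _ < ⊤ := ENNReal.mul_lt_top (by simp [hB]) (ENNReal.add_lt_top.2 ⟨hkfin, hkfin⟩)

open Convolution in
lemma moll_energy {γ : ℝ} {h : ℝ → ℝ} (hc : Continuous h) (φ : ContDiffBump (0:ℝ)) :
    EN (nuM γ) (DD (φ.normed volume ⋆[ContinuousLinearMap.lsmul ℝ ℝ, volume] h)) ≤
      EN (nuM γ) (DD h) := by
  set ρ : ℝ → ℝ := φ.normed volume with hρ
  have hρc : Continuous ρ := φ.continuous_normed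
  have hρ0 : ∀ s, 0 ≤ ρ s := φ.nonneg_normed
  have hρs : HasCompactSupport ρ := φ.hasCompactSupport_normed
  have hρ1 : ∫ s, ρ s = 1 := φ.integral_normed
  have hDm := DD_measurable hc.measurable
  have hwm := measurable_wtE γ
  have hint : ∀ g : ℝ → ℝ, Continuous g → Integrable (fun s => ρ s * g s) := by
    intro g hg
    exact (hρc.mul hg).integrable_of_hasCompactSupport hρs.mul_right
  have hρl : ∫⁻ s, ENNReal.ofReal (ρ s) = 1 := by
    rw [← ofReal_integral_eq_lintegral_ofReal (by simpa using hint (fun _ => 1) (by fun_prop))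
      (Eventually.of_forall hρ0), hρ1]; simp
  have hconv : ∀ p : ℝ × ℝ, DD (ρ ⋆[ContinuousLinearMap.lsmul ℝ ℝ, volume] h) p =
      ∫ s, ρ s * DD h (p - (s, s)) := by
    intro p
    simp only [DD, convolution, ContinuousLinearMap.lsmul_apply, smul_eq_mul, Prod.fst_sub, Prod.snd_sub,
      mul_sub]
    rw [integral_sub (hint _ (by fun_prop)) (hint _ (by fun_prop))]
  have hjen : ∀ p : ℝ × ℝ, ENNReal.ofReal
      (DD (ρ ⋆[ContinuousLinearMap.lsmul ℝ ℝ, volume] h) p ^ 2) ≤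
      ∫⁻ s, ENNReal.ofReal (ρ s) * ENNReal.ofReal (DD h (p - (s, s)) ^ 2) := by
    intro p
    set g : ℝ → ℝ := fun s => DD h (p - (s, s)) with hg
    have hgc : Continuous g := by simp only [hg, DD]; fun_prop
    set a := ∫ s, ρ s * g s with ha
    have hle : a ^ 2 ≤ ∫ s, ρ s * g s ^ 2 := by
      have h0 : 0 ≤ ∫ s, ρ s * (g s - a) ^ 2 :=
        integral_nonneg fun s => mul_nonneg (hρ0 s) (sq_nonneg _)
      have h1 : ∫ s, ρ s * (g s - a) ^ 2 = (∫ s, ρ s * g s ^ 2) - a ^ 2 := by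
        have e : ∀ s, ρ s * (g s - a) ^ 2 =
            ρ s * g s ^ 2 - ((2 * a) * (ρ s * g s) - a ^ 2 * ρ s) := fun s => by ring
        have j1 := hint (fun s => g s ^ 2) (by fun_prop)
        have j2 : Integrable (fun s => (2 * a) * (ρ s * g s)) := (hint g hgc).const_mul _
        have j3 : Integrable (fun s => a ^ 2 * ρ s) := by
          have := (hint (fun _ => 1) (by fun_prop)).const_mul (a ^ 2)
          simpa using this
        have j4 : Integrable (fun s => (2 * a) * (ρ s * g s) - a ^ 2 * ρ s) := j2.sub j3
        simp_rw [e]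
        rw [integral_sub j1 j4, integral_sub j2 j3, integral_const_mul, integral_const_mul, hρ1, ← ha]
        ring
      linarith
    rw [hconv p]
    calc ENNReal.ofReal (a ^ 2) ≤ ENNReal.ofReal (∫ s, ρ s * g s ^ 2) :=
          ENNReal.ofReal_le_ofReal hle
      _ = ∫⁻ s, ENNReal.ofReal (ρ s * g s ^ 2) :=
          ofReal_integral_eq_lintegral_ofReal (hint _ (by fun_prop))
            (Eventually.of_forall fun s => mul_nonneg (hρ0 s) (sq_nonneg _))
      _ = _ := by
          congr 1; ext s; rw [ENNReal.ofReal_mul (hρ0 s)]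
  have hcm : Measurable (DD (ρ ⋆[ContinuousLinearMap.lsmul ℝ ℝ, volume] h)) := by
    apply DD_measurable
    apply Continuous.measurable
    exact (hρs.contDiff_convolution_left (n := 0) (ContinuousLinearMap.lsmul ℝ ℝ)
      (φ.contDiff_normed (n := 0)) hc.locallyIntegrable).continuous
  unfold EN
  rw [lintegral_nuM γ (by fun_prop), lintegral_nuM γ (by fun_prop)]
  calc ∫⁻ p, wtE γ p * ENNReal.ofReal (DD (ρ ⋆[ContinuousLinearMap.lsmul ℝ ℝ, volume] h) p ^ 2)
      ≤ ∫⁻ p : ℝ × ℝ, ∫⁻ s, wtE γ p *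
        (ENNReal.ofReal (ρ s) * ENNReal.ofReal (DD h (p - (s, s)) ^ 2)) := by
        apply lintegral_mono
        intro p
        beta_reduce
        rw [lintegral_const_mul _ (by fun_prop)]
        gcongr
        exact hjen p
    _ = ∫⁻ s, ∫⁻ p : ℝ × ℝ, wtE γ p *
        (ENNReal.ofReal (ρ s) * ENNReal.ofReal (DD h (p - (s, s)) ^ 2)) := by
        rw [lintegral_lintegral_swap]
        exact Measurable.aemeasurable (by fun_prop)
    _ = ∫⁻ s, ENNReal.ofReal (ρ s) * ∫⁻ p : ℝ × ℝ, wtE γ p * ENNReal.ofReal (DD h p ^ 2) := by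
        congr 1; ext s
        rw [← lintegral_sub_right_eq_self (fun p : ℝ × ℝ => wtE γ p * ENNReal.ofReal (DD h p ^ 2))
          (s, s), ← lintegral_const_mul _ (by fun_prop)]
        congr 1; ext p
        have : wtE γ (p - (s, s)) = wtE γ p := by simp [wtE]
        rw [this]; ring
    _ = _ := by
        rw [lintegral_mul_const _ (by fun_prop), hρl, one_mul]

open Convolution in
lemma density_compact {γ : ℝ} (hγ : γ ∈ Set.Ioo (1:ℝ) 2) {h : ℝ → ℝ} (hc : Continuous h) {K : Set ℝ}
    (hK : IsCompact K) (hK1 : K ⊆ Set.Ioo 0 1) (hs : Function.support h ⊆ K)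
    (hm : MemLp (DD h) 2 (muM γ)) : hm.toLp _ ∈ KK γ := by
  obtain ⟨δ, hδ, hδK⟩ := hK.exists_cthickening_subset_open isOpen_Ioo hK1
  have hDm := DD_measurable hc.measurable
  have hfin := EN_nu_fin hγ hc hδ hK hδK hs ((memLp_iff_EN hDm).1 hm)
  let φ : ℕ → ContDiffBump (0:ℝ) := fun n =>
    ⟨δ / (n + 1) / 2, δ / (n + 1), by positivity, half_lt_self (by positivity)⟩
  have hφ : Tendsto (fun n => (φ n).rOut) atTop (nhds 0) := by
    have := (tendsto_one_div_add_atTop_nhds_zero_nat (𝕜 := ℝ)).const_mul δ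
    simpa [φ, div_eq_mul_inv] using this
  set f : ℕ → ℝ → ℝ := fun n => (φ n).normed volume ⋆[ContinuousLinearMap.lsmul ℝ ℝ, volume] h with hf
  have htest : ∀ n, IsSpatialTest (f n) := by
    intro n
    refine ⟨?_, Metric.cthickening δ K, hK.cthickening, hδK, ?_⟩
    · exact (φ n).hasCompactSupport_normed.contDiff_convolution_left _ (φ n).contDiff_normed
        hc.locallyIntegrable
    · refine (support_convolution_subset _).trans ?_
      rintro _ ⟨a, ha, b, hb, rfl⟩
      rw [(φ n).support_normed_eq] at ha
      refine Metric.mem_cthickening_of_dist_le _ b _ _ (hs hb) ?_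
      have h1 : dist a 0 < δ / (n + 1) := ha
      have h2 : δ / ((n:ℝ) + 1) ≤ δ := div_le_self hδ.le (by linarith [(Nat.cast_nonneg n : (0:ℝ) ≤ n)])
      simp only [Real.dist_eq, sub_zero] at h1
      simp only [Real.dist_eq, add_sub_cancel_right]
      linarith
  have hfm : ∀ n, Measurable (DD (f n)) := fun n => DD_measurable (htest n).1.continuous.measurable
  have hconv : ∀ x, Tendsto (fun n => f n x) atTop (nhds (h x)) := fun x =>
    ContDiffBump.convolution_tendsto_right_of_continuous hφ hc x
  have hst : Tendsto (fun n => EN (nuM γ) (DD (f n) - DD h)) atTop (nhds 0) :=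
    strong_of_bound hfm hDm (fun p => (hconv p.1).sub (hconv p.2))
      (fun n => moll_energy hc (φ n)) hfin
  refine mem_KK_of_tendsto (f := f) (fun n => (htest n).memLp hγ.2) hm
    (fun n => test_mem_KK (htest n) _) ?_
  exact tendsto_of_tendsto_of_tendsto_of_le_of_le tendsto_const_nhds hst (fun _ => zero_le)
    (fun n => EN_mu_le_nu γ _)

lemma EN_mono_abs {m : Measure (ℝ × ℝ)} {f g : ℝ × ℝ → ℝ} (h : ∀ p, |f p| ≤ |g p|) :
    EN m f ≤ EN m g := by
  unfold EN
  apply lintegral_mono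
  intro p
  apply ENNReal.ofReal_le_ofReal
  exact sq_le_sq.2 (h p)

lemma soft_lip (ε : ℝ) (a b : ℝ) :
    |(a - max (-ε) (min ε a)) - (b - max (-ε) (min ε b))| ≤ |a - b| := by
  rcases le_total a b with hab | hab
  · rw [abs_of_nonpos (sub_nonpos.2 hab), abs_le]
    rcases max_cases (-ε) (min ε a) with h1 | h1 <;> rcases max_cases (-ε) (min ε b) with h2 | h2 <;>
    rcases min_cases ε a with h3 | h3 <;> rcases min_cases ε b with h4 | h4 <;>
    constructor <;> linarith
  · rw [abs_of_nonneg (sub_nonneg.2 hab), abs_le]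
    rcases max_cases (-ε) (min ε a) with h1 | h1 <;> rcases max_cases (-ε) (min ε b) with h2 | h2 <;>
    rcases min_cases ε a with h3 | h3 <;> rcases min_cases ε b with h4 | h4 <;>
    constructor <;> linarith

lemma density {γ : ℝ} (hγ : γ ∈ Set.Ioo (1:ℝ) 2) {h : ℝ → ℝ} (hc : Continuous h)
    (h0 : ∀ x, x ∉ Set.Ioo (0:ℝ) 1 → h x = 0)
    (hm : MemLp (DD h) 2 (muM γ)) : hm.toLp _ ∈ KK γ := by
  have hDm := DD_measurable hc.measurable
  have hfin := (memLp_iff_EN hDm).1 hm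
  set e : ℕ → ℝ := fun n => 1 / ((n:ℝ) + 1) with he
  have hepos : ∀ n, 0 < e n := fun n => by simp only [he]; positivity
  have helim : Tendsto e atTop (nhds 0) := tendsto_one_div_add_atTop_nhds_zero_nat
  set f : ℕ → ℝ → ℝ := fun n x => h x - max (-(e n)) (min (e n) (h x)) with hf
  have hfc : ∀ n, Continuous (f n) := fun n => by simp only [hf]; fun_prop
  have hb : ∀ n, EN (muM γ) (DD (f n)) ≤ EN (muM γ) (DD h) := fun n =>
    EN_mono_abs fun p => soft_lip (e n) (h p.1) (h p.2)
  have hfm : ∀ n, MemLp (DD (f n)) 2 (muM γ) := fun n =>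
    (memLp_iff_EN (DD_measurable (hfc n).measurable)).2 ((hb n).trans_lt hfin)
  have hconv : ∀ x, Tendsto (fun n => f n x) atTop (nhds (h x)) := by
    intro x
    have : Tendsto (fun n => h x - max (-(e n)) (min (e n) (h x))) atTop
        (nhds (h x - max (-0) (min 0 (h x)))) :=
      tendsto_const_nhds.sub (helim.neg.max (helim.min tendsto_const_nhds))
    have e0 : h x - max (-0) (min 0 (h x)) = h x := by simp
    rw [e0] at this
    exact this
  refine mem_KK_of_tendsto hfm hm (fun n => ?_)
    (strong_of_bound (fun n => DD_measurable (hfc n).measurable) hDm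
      (fun p => (hconv p.1).sub (hconv p.2)) hb hfin)
  have hsub : {x | e n ≤ |h x|} ⊆ Set.Ioo (0:ℝ) 1 := by
    intro x hx
    by_contra hx'
    have : e n ≤ |h x| := hx
    rw [h0 x hx', abs_zero] at this
    exact absurd (hepos n) (not_lt.2 this)
  refine density_compact hγ (hfc n) (K := {x | e n ≤ |h x|}) ?_ hsub ?_ (hfm n)
  · exact Metric.isCompact_of_isClosed_isBounded (isClosed_le continuous_const hc.abs)
      (Metric.isBounded_Ioo 0 1 |>.subset hsub)
  · intro x hx
    by_contra hlt
    apply hx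
    have hlt' : |h x| < e n := not_le.1 hlt
    have := abs_lt.1 hlt'
    simp only [hf]
    rw [min_eq_right this.2.le, max_eq_right this.1.le, sub_self]

lemma muM_eq (γ : ℝ) : muM γ = ((volume.restrict (Set.Icc (0:ℝ) 1)).prod
    (volume.restrict (Set.Icc (0:ℝ) 1))).withDensity (wtE γ) := by
  unfold muM nuM sqI
  rw [restrict_withDensity (measurableSet_Icc.prod measurableSet_Icc), Measure.volume_eq_prod,
    ← Measure.prod_restrict]

/-- second-order remainder bound -/
lemma test_taylor {G : ℝ → ℝ} (hG : IsSpatialTest G) {δ : ℝ} (hδ : 0 < δ) :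
    ∃ C : ℝ, 0 ≤ C ∧ ∀ u v,
      |G v - G u - (if |v - u| < δ then deriv G u * (v - u) else 0)| ≤ C * |v - u| ^ 2 := by
  have hd : Differentiable ℝ G := hG.1.differentiable (by simp)
  have hg1 : ContDiff ℝ 1 (deriv G) := by
    have : ContDiff ℝ 2 G := contDiff_infty.1 hG.1 2
    exact (contDiff_succ_iff_deriv (n := 1)).1 (by simpa [one_add_one_eq_two] using this) |>.2.2
  obtain ⟨L, hL⟩ := hg1.lipschitzWith_of_hasCompactSupport hG.hcs.deriv (by simp)
  obtain ⟨M, hM⟩ := hG.hcs.exists_bound_of_continuous hG.1.continuous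
  have hM0 : 0 ≤ M := (norm_nonneg _).trans (hM 0)
  refine ⟨L + 2 * M / δ ^ 2, by positivity, ?_⟩
  intro u v
  split_ifs with huv
  · have key : ‖(G v - deriv G u * v) - (G u - deriv G u * u)‖ ≤ (L * |v - u|) * ‖v - u‖ := by
      refine (convex_uIcc u v).norm_image_sub_le_of_norm_hasDerivWithin_le
        (f := fun x => G x - deriv G u * x) (f' := fun x => deriv G x - deriv G u) ?_ ?_
        Set.left_mem_uIcc Set.right_mem_uIcc
      · intro x _
        have h1 := (hd x).hasDerivAt
        have h2 := (hasDerivAt_id x).const_mul (deriv G u)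
        have h3 := (h1.sub h2).hasDerivWithinAt (s := Set.uIcc u v)
        rw [mul_one] at h3
        exact h3
      · intro x hx
        have h1 := hL.dist_le_mul x u
        rw [dist_eq_norm, Real.dist_eq] at h1
        refine h1.trans ?_
        exact mul_le_mul_of_nonneg_left (Set.abs_sub_left_of_mem_uIcc hx) L.2
    have e : G v - G u - deriv G u * (v - u) = (G v - deriv G u * v) - (G u - deriv G u * u) := by ring
    rw [e, ← Real.norm_eq_abs]
    refine key.trans ?_
    have : 0 ≤ 2 * M / δ ^ 2 * |v - u| ^ 2 := by positivity
    rw [Real.norm_eq_abs]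
    nlinarith
  · push Not at huv
    rw [sub_zero]
    have h1 : |G v - G u| ≤ 2 * M := by
      calc |G v - G u| ≤ |G v| + |G u| := abs_sub _ _
        _ ≤ M + M := add_le_add (hM v) (hM u)
        _ = _ := by ring
    have h2 : 2 * M ≤ 2 * M / δ ^ 2 * |v - u| ^ 2 := by
      rw [div_mul_eq_mul_div, le_div_iff₀ (by positivity)]
      gcongr
    have : 0 ≤ L * |v - u| ^ 2 := by positivity
    linarith

def Jr (γ ε : ℝ) (G : ℝ → ℝ) (u v : ℝ) : ℝ :=
  if ε ≤ |u - v| then (G v - G u) * |v - u| ^ (-(1 + γ)) else 0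

lemma Jr_eq (γ ε : ℝ) (G : ℝ → ℝ) (u : ℝ) :
    ∫ v in {v : ℝ | v ∈ Set.Icc (0:ℝ) 1 ∧ ε ≤ abs (u - v)}, (G v - G u) * |v - u| ^ (-(1 + γ)) =
      ∫ v in Set.Icc (0:ℝ) 1, Jr γ ε G u v := by
  have hms : MeasurableSet {v : ℝ | ε ≤ |u - v|} :=
    measurableSet_le measurable_const (by fun_prop)
  have h1 : {v : ℝ | v ∈ Set.Icc (0:ℝ) 1 ∧ ε ≤ abs (u - v)} =
      Set.Icc (0:ℝ) 1 ∩ {v : ℝ | ε ≤ |u - v|} := rfl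
  rw [h1, ← setIntegral_indicator hms]
  rfl

lemma rpow_bound {γ ε t : ℝ} (hγ : 1 < γ) (hε : 0 < ε) (h : ε ≤ t) :
    t ^ (-(1 + γ)) ≤ ε ^ (-(1 + γ)) :=
  Real.rpow_le_rpow_of_nonpos hε h (by linarith)

lemma int_abs_le {γ : ℝ} (hγ : γ < 2) {u : ℝ} (hu : u ∈ Set.Icc (0:ℝ) 1) :
    Integrable (fun v => |v - u| ^ (1 - γ)) (volume.restrict (Set.Icc (0:ℝ) 1)) ∧
    ∫ v in Set.Icc (0:ℝ) 1, |v - u| ^ (1 - γ) ≤ (AA γ).toReal := by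
  have h1 := lint_abs_le γ hu
  simp_rw [abs_sub_comm u] at h1
  have hm : Measurable (fun v => |v - u| ^ (1 - γ)) := by fun_prop
  have hnn : ∀ v, 0 ≤ |v - u| ^ (1 - γ) := fun v => by positivity
  constructor
  · refine ⟨hm.aestronglyMeasurable, ?_⟩
    rw [hasFiniteIntegral_iff_ofReal (Eventually.of_forall hnn)]
    exact h1.trans_lt (AA_lt_top hγ)
  · rw [integral_eq_lintegral_of_nonneg_ae (Eventually.of_forall hnn) hm.aestronglyMeasurable]
    exact ENNReal.toReal_mono (AA_lt_top hγ).ne h1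

/-- remainder kernel with cutoff -/
def Rr (γ δ ε : ℝ) (G : ℝ → ℝ) (u v : ℝ) : ℝ :=
  if ε ≤ |u - v| then (G v - G u - (if |v - u| < δ then deriv G u * (v - u) else 0)) *
    |v - u| ^ (-(1 + γ)) else 0

lemma odd_zero (γ ε δ u : ℝ) (c : ℝ) :
    ∫ v : ℝ, (if ε ≤ |u - v| then (if |v - u| < δ then c * (v - u) else 0) *
    |v - u| ^ (-(1 + γ)) else 0) = 0 := by
  set f : ℝ → ℝ := fun v => (if ε ≤ |u - v| then (if |v - u| < δ then c * (v - u) else 0) *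
    |v - u| ^ (-(1 + γ)) else 0) with hf
  have h1 : ∫ v, f (2 * u - v) = ∫ v, f v := integral_sub_left_eq_self f volume (2 * u)
  have h2 : ∀ v, f (2 * u - v) = - f v := by
    intro v
    have e1 : u - (2 * u - v) = v - u := by ring
    have e2 : 2 * u - v - u = u - v := by ring
    simp only [hf]
    rw [e1, e2, abs_sub_comm v u]
    split_ifs <;> ring
  simp_rw [h2, integral_neg] at h1
  linarith

lemma Jr_Rr {γ : ℝ} (hγ : 1 < γ) {G : ℝ → ℝ} (hG : IsSpatialTest G) {K : Set ℝ} {δ ε : ℝ}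
    (hε : 0 < ε) (hδK : Metric.cthickening δ K ⊆ Set.Ioo 0 1)
    (hK : IsCompact K) (hs : Function.support G ⊆ K) (u : ℝ) :
    ∫ v in Set.Icc (0:ℝ) 1, Jr γ ε G u v = ∫ v in Set.Icc (0:ℝ) 1, Rr γ δ ε G u v := by
  have hGm := hG.1.continuous.measurable
  obtain ⟨M, hM⟩ := hG.hcs.exists_bound_of_continuous hG.1.continuous
  have hms : MeasurableSet {v : ℝ | ε ≤ |u - v|} :=
    measurableSet_le measurable_const (by fun_prop)
  have hms2 : MeasurableSet {v : ℝ | |v - u| < δ} :=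
    measurableSet_lt (by fun_prop) measurable_const
  set O : ℝ → ℝ := fun v => (if ε ≤ |u - v| then (if |v - u| < δ then deriv G u * (v - u) else 0) *
    |v - u| ^ (-(1 + γ)) else 0) with hO
  have hOm : Measurable O := by
    refine Measurable.ite hms (Measurable.mul (Measurable.ite hms2 ?_ ?_) ?_) ?_ <;> fun_prop
  have hJm : Measurable (Jr γ ε G u) := by
    refine Measurable.ite hms ?_ ?_ <;> fun_prop
  have hJi : Integrable (Jr γ ε G u) (volume.restrict (Set.Icc (0:ℝ) 1)) := by
    refine Integrable.of_bound hJm.aestronglyMeasurable ((2 * M) * ε ^ (-(1 + γ)))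
      (Eventually.of_forall fun v => ?_)
    have hM0 : 0 ≤ M := (norm_nonneg _).trans (hM 0)
    unfold Jr
    split_ifs with h
    · rw [abs_sub_comm] at h
      rw [norm_mul, Real.norm_of_nonneg (by positivity : 0 ≤ |v - u| ^ (-(1 + γ)))]
      have h1 : ‖G v - G u‖ ≤ 2 * M := (norm_sub_le _ _).trans (by linarith [hM v, hM u])
      have := rpow_bound hγ hε h
      gcongr
    · simp; positivity
  have hOi : Integrable O (volume.restrict (Set.Icc (0:ℝ) 1)) := by
    refine Integrable.of_bound hOm.aestronglyMeasurable (|deriv G u| * |δ| * ε ^ (-(1 + γ)))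
      (Eventually.of_forall fun v => ?_)
    simp only [hO]
    split_ifs with h h2
    · rw [abs_sub_comm] at h
      rw [norm_mul, Real.norm_of_nonneg (by positivity : 0 ≤ |v - u| ^ (-(1 + γ)))]
      have h1 : ‖deriv G u * (v - u)‖ ≤ |deriv G u| * |δ| := by
        rw [norm_mul, Real.norm_eq_abs, Real.norm_eq_abs]
        have := h2.le.trans (le_abs_self δ)
        gcongr
      have := rpow_bound hγ hε h
      gcongr
    · simp; positivity
    · simp; positivity
  have hsub : ∀ v, Rr γ δ ε G u v = Jr γ ε G u v - O v := by
    intro v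
    simp only [Rr, Jr, hO]
    split_ifs <;> ring
  have hOz : ∫ v in Set.Icc (0:ℝ) 1, O v = 0 := by
    by_cases hu : deriv G u = 0
    · have : O = fun _ => 0 := by
        ext v; simp [hO, hu]
      rw [this]; simp
    · have huK : u ∈ K := by
        have h1 : u ∈ tsupport G := support_deriv_subset (Function.mem_support.2 hu)
        exact (closure_minimal hs hK.isClosed) h1
      have := odd_zero γ ε δ u (deriv G u)
      rw [setIntegral_eq_integral_of_forall_compl_eq_zero]
      · exact this
      intro v hv
      have hd : ¬ |v - u| < δ := by
        intro hlt
        apply hv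
        apply Set.Ioo_subset_Icc_self
        apply hδK
        exact Metric.mem_cthickening_of_dist_le v u δ K huK hlt.le
      simp [hO, hd]
  simp_rw [hsub]
  rw [integral_sub hJi hOi, hOz, sub_zero]

lemma lap_facts {γ : ℝ} (hγ : γ ∈ Set.Ioo (1:ℝ) 2) {G : ℝ → ℝ} (hG : IsSpatialTest G) :
    ∃ B : ℝ, (∀ ε > 0, ∀ u ∈ Set.Icc (0:ℝ) 1, |cGamma γ * ∫ v in Set.Icc (0:ℝ) 1, Jr γ ε G u v| ≤ B) ∧
    ∀ u ∈ Set.Icc (0:ℝ) 1, Tendsto (fun ε => cGamma γ * ∫ v in Set.Icc (0:ℝ) 1, Jr γ ε G u v)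
      (nhdsWithin 0 (Set.Ioi 0)) (nhds (fracLap γ G u)) := by
  obtain ⟨_, K, hK, hK1, hs⟩ := id hG
  obtain ⟨δ, hδ, hδK⟩ := hK.exists_cthickening_subset_open isOpen_Ioo hK1
  obtain ⟨C, hC0, hC⟩ := test_taylor hG hδ
  have hGm := hG.1.continuous.measurable
  have hdom : ∀ ε u v, ‖Rr γ δ ε G u v‖ ≤ C * |v - u| ^ (1 - γ) := by
    intro ε u v
    unfold Rr
    split_ifs with h0 h1
    · have := hC u v
      rw [if_pos h1] at this
      rw [norm_mul, Real.norm_of_nonneg (by positivity : 0 ≤ |v - u| ^ (-(1 + γ)))]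
      rcases eq_or_ne v u with rfl | hne
      · simp; positivity
      · have hp : 0 < |v - u| := abs_pos.2 (sub_ne_zero.2 hne)
        have e : |v - u| ^ (1 - γ) = |v - u| ^ 2 * |v - u| ^ (-(1 + γ)) := by
          rw [← Real.rpow_natCast, ← Real.rpow_add hp]; congr 1; push_cast; ring
        rw [e, ← mul_assoc]
        gcongr
        exact this
    · have := hC u v
      rw [if_neg h1] at this
      rw [norm_mul, Real.norm_of_nonneg (by positivity : 0 ≤ |v - u| ^ (-(1 + γ)))]
      rcases eq_or_ne v u with rfl | hne
      · simp; positivity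
      · have hp : 0 < |v - u| := abs_pos.2 (sub_ne_zero.2 hne)
        have e : |v - u| ^ (1 - γ) = |v - u| ^ 2 * |v - u| ^ (-(1 + γ)) := by
          rw [← Real.rpow_natCast, ← Real.rpow_add hp]; congr 1; push_cast; ring
        rw [e, ← mul_assoc]
        gcongr
        exact this
    · simp; positivity
  have hRm : ∀ ε u, Measurable (Rr γ δ ε G u) := by
    intro ε u
    have hms : MeasurableSet {v : ℝ | ε ≤ |u - v|} :=
      measurableSet_le measurable_const (by fun_prop)
    have hms2 : MeasurableSet {v : ℝ | |v - u| < δ} :=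
      measurableSet_lt (by fun_prop) measurable_const
    refine Measurable.ite hms (Measurable.mul (Measurable.sub ?_ (Measurable.ite hms2 ?_ ?_)) ?_) ?_ <;>
      fun_prop
  have hc := cGamma_pos hγ.1
  refine ⟨cGamma γ * (C * (AA γ).toReal), ?_, ?_⟩
  · intro ε hε u hu
    rw [Jr_Rr hγ.1 hG hε hδK hK hs u, abs_mul, abs_of_pos hc]
    gcongr
    rw [← Real.norm_eq_abs]
    obtain ⟨h1, h2⟩ := int_abs_le hγ.2 hu
    calc _ ≤ ∫ v in Set.Icc (0:ℝ) 1, C * |v - u| ^ (1 - γ) :=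
          norm_integral_le_of_norm_le (h1.const_mul C) (Eventually.of_forall (hdom ε u))
      _ = C * ∫ v in Set.Icc (0:ℝ) 1, |v - u| ^ (1 - γ) := integral_const_mul _ _
      _ ≤ _ := by gcongr
  · intro u hu
    obtain ⟨h1, _⟩ := int_abs_le hγ.2 hu
    have hlim : Tendsto (fun ε => ∫ v in Set.Icc (0:ℝ) 1, Rr γ δ ε G u v) (nhdsWithin 0 (Set.Ioi 0))
        (nhds (∫ v in Set.Icc (0:ℝ) 1, Rr γ δ 0 G u v)) := by
      refine tendsto_integral_filter_of_dominated_convergence (fun v => C * |v - u| ^ (1 - γ))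
        (Eventually.of_forall fun ε => (hRm ε u).aestronglyMeasurable)
        (Eventually.of_forall fun ε => Eventually.of_forall (hdom ε u)) (h1.const_mul C)
        (Eventually.of_forall fun v => ?_)
      rcases eq_or_ne u v with rfl | hne
      · have : ∀ ε, Rr γ δ ε G u u = 0 := by intro ε; simp [Rr]
        simp_rw [this]; exact tendsto_const_nhds
      · have hp : 0 < |u - v| := abs_pos.2 (sub_ne_zero.2 hne)
        apply tendsto_const_nhds.congr'
        have : ∀ᶠ ε in nhdsWithin (0:ℝ) (Set.Ioi 0), ε < |u - v| :=
          mem_nhdsWithin_of_mem_nhds (Iio_mem_nhds hp)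
        filter_upwards [this] with ε hε
        unfold Rr
        rw [if_pos hε.le, if_pos hp.le]
    have hlim2 : HasFracLapAt γ G u (cGamma γ * ∫ v in Set.Icc (0:ℝ) 1, Rr γ δ 0 G u v) := by
      unfold HasFracLapAt
      simp_rw [Jr_eq]
      refine (hlim.const_mul _).congr' ?_
      filter_upwards [self_mem_nhdsWithin] with ε hε
      rw [Jr_Rr hγ.1 hG hε hδK hK hs u]
    have hex : ∃ L, HasFracLapAt γ G u L := ⟨_, hlim2⟩
    have hsp : HasFracLapAt γ G u (fracLap γ G u) := by
      unfold fracLap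
      rw [dif_pos hex]
      exact hex.choose_spec
    unfold HasFracLapAt at hsp
    simp_rw [Jr_eq] at hsp
    exact hsp

lemma pp_ae (F G : ℝ → ℝ) (γ : ℝ) (h : F =ᵐ[volume.restrict (Set.Icc (0:ℝ) 1)] G) :
    DD F =ᵐ[muM γ] DD G := by
  rw [muM_eq]
  apply (withDensity_absolutelyContinuous _ _).ae_eq
  have h1 := Measure.quasiMeasurePreserving_fst.ae_eq_comp (μ := (volume.restrict (Set.Icc (0:ℝ) 1)).prod
    (volume.restrict (Set.Icc (0:ℝ) 1))) h
  have h2 := Measure.quasiMeasurePreserving_snd.ae_eq_comp (μ := (volume.restrict (Set.Icc (0:ℝ) 1)).prod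
    (volume.restrict (Set.Icc (0:ℝ) 1))) h
  filter_upwards [h1, h2] with p h1 h2
  simp only [Function.comp] at h1 h2
  simp [DD, h1, h2]

lemma ibp {γ : ℝ} (hγ : γ ∈ Set.Ioo (1:ℝ) 2) {G : ℝ → ℝ} (hG : IsSpatialTest G) {Φ : ℝ → ℝ}
    (hΦ : Continuous Φ) (hm : MemLp (DD Φ) 2 (muM γ)) :
    ∫ u in Set.Icc (0:ℝ) 1, Φ u * fracLap γ G u =
      -(cGamma γ / 2) * ∫ p, DD Φ p * DD G p ∂(muM γ) := by
  set P : Measure ℝ := volume.restrict (Set.Icc (0:ℝ) 1) with hP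
  have hGm := hG.1.continuous.measurable
  have hΦm := hΦ.measurable
  have hDΦ := DD_measurable hΦm
  have hDG := DD_measurable hGm
  obtain ⟨B, hB, hlim⟩ := lap_facts hγ hG
  obtain ⟨M, hM⟩ := (isCompact_Icc (a := (0:ℝ)) (b := 1)).exists_bound_of_continuousOn hΦ.continuousOn
  obtain ⟨N, hN⟩ := hG.hcs.exists_bound_of_continuous hG.1.continuous
  have hN0 : 0 ≤ N := (norm_nonneg _).trans (hN 0)
  have hM0 : 0 ≤ M := (norm_nonneg _).trans (hM 0 (by simp))
  set e : ℕ → ℝ := fun n => 1 / ((n:ℝ) + 1) with he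
  have hepos : ∀ n, 0 < e n := fun n => by simp only [he]; positivity
  have helim : Tendsto e atTop (nhds 0) := tendsto_one_div_add_atTop_nhds_zero_nat
  have helim2 : Tendsto e atTop (nhdsWithin 0 (Set.Ioi 0)) :=
    tendsto_nhdsWithin_iff.2 ⟨helim, Eventually.of_forall hepos⟩
  have hms : ∀ ε : ℝ, MeasurableSet {p : ℝ × ℝ | ε ≤ |p.1 - p.2|} := fun ε =>
    measurableSet_le measurable_const (by fun_prop)
  have hJm : ∀ ε, Measurable (fun p : ℝ × ℝ => Jr γ ε G p.1 p.2) := by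
    intro ε
    refine Measurable.ite (hms ε) ?_ ?_ <;> fun_prop
  set Q : ℝ → ℝ × ℝ → ℝ := fun ε p =>
    if ε ≤ |p.1 - p.2| then DD Φ p * DD G p * |p.1 - p.2| ^ (-(1 + γ)) else 0 with hQ
  have hQm : ∀ ε, Measurable (Q ε) := by
    intro ε
    refine Measurable.ite (hms ε) ?_ ?_ <;> fun_prop
  -- left limit
  have hL : Tendsto (fun n => ∫ u, Φ u * (cGamma γ * ∫ v, Jr γ (e n) G u v ∂P) ∂P) atTop
      (nhds (∫ u, Φ u * fracLap γ G u ∂P)) := by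
    refine tendsto_integral_of_dominated_convergence (fun _ => M * B) ?_ (integrable_const _) ?_ ?_
    · intro n
      have h1 : StronglyMeasurable (fun u => ∫ v, Jr γ (e n) G u v ∂P) :=
        (hJm (e n)).stronglyMeasurable.integral_prod_right'
      exact (hΦm.stronglyMeasurable.mul (h1.const_mul _)).aestronglyMeasurable
    · intro n
      filter_upwards [ae_restrict_mem measurableSet_Icc] with u hu
      rw [norm_mul]
      exact mul_le_mul (hM u hu) (hB (e n) (hepos n) u hu) (norm_nonneg _) hM0
    · filter_upwards [ae_restrict_mem measurableSet_Icc] with u hu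
      exact ((hlim u hu).comp helim2).const_mul _
  -- symmetrization
  have hsym : ∀ ε > 0, ∫ u, Φ u * (cGamma γ * ∫ v, Jr γ ε G u v ∂P) ∂P =
      -(cGamma γ / 2) * ∫ p, Q ε p ∂(P.prod P) := by
    intro ε hε
    set J : ℝ × ℝ → ℝ := fun p => Φ p.1 * Jr γ ε G p.1 p.2 with hJ
    have hJmeas : Measurable J := (hΦm.comp measurable_fst).mul (hJm ε)
    have hJi : Integrable J (P.prod P) := by
      refine Integrable.of_bound hJmeas.aestronglyMeasurable (M * ((2 * N) * ε ^ (-(1 + γ)))) ?_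
      have : ∀ᵐ p ∂(P.prod P), p ∈ Set.Icc (0:ℝ) 1 ×ˢ Set.Icc (0:ℝ) 1 := by
        rw [hP, Measure.prod_restrict]
        exact ae_restrict_mem (measurableSet_Icc.prod measurableSet_Icc)
      filter_upwards [this] with p hp
      rw [hJ, norm_mul]
      refine mul_le_mul (hM _ hp.1) ?_ (norm_nonneg _) hM0
      unfold Jr
      split_ifs with h
      · rw [abs_sub_comm] at h
        rw [norm_mul, Real.norm_of_nonneg (by positivity : 0 ≤ |p.2 - p.1| ^ (-(1 + γ)))]
        have h1 : ‖G p.2 - G p.1‖ ≤ 2 * N := (norm_sub_le _ _).trans (by linarith [hN p.2, hN p.1])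
        have := rpow_bound hγ.1 hε h
        gcongr
      · simp; positivity
    have h1 : ∫ u, Φ u * (cGamma γ * ∫ v, Jr γ ε G u v ∂P) ∂P = cGamma γ * ∫ p, J p ∂(P.prod P) := by
      rw [integral_prod _ hJi, ← integral_const_mul]
      congr 1; ext u
      simp only [hJ]
      rw [integral_const_mul]; ring
    have h2 : ∫ p, J p.swap ∂(P.prod P) = ∫ p, J p ∂(P.prod P) := integral_prod_swap J
    have h3 : ∫ p, Q ε p ∂(P.prod P) = - ∫ p, (J p + J p.swap) ∂(P.prod P) := by
      rw [← integral_neg]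
      congr 1; ext p
      simp only [hQ, hJ, Jr, DD, Prod.fst_swap, Prod.snd_swap]
      rw [abs_sub_comm p.2 p.1]
      split_ifs <;> ring
    have hJs : Integrable (fun p => J p.swap) (P.prod P) := hJi.swap
    rw [h1, h3, integral_add hJi hJs, h2]
    ring
  -- right limit
  have hprodint : Integrable (fun p => DD Φ p * DD G p) (muM γ) :=
    hm.integrable_mul (hG.memLp hγ.2)
  have hwt : ∀ p, (wtE γ p).toReal = |p.1 - p.2| ^ (-(1 + γ)) := by
    intro p; unfold wtE; rw [ENNReal.toReal_ofReal (by positivity)]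
  have hwtlt : ∀ᵐ p ∂(P.prod P), wtE γ p < ⊤ :=
    Eventually.of_forall fun p => by unfold wtE; exact ENNReal.ofReal_lt_top
  have hQint : Integrable (fun p => |p.1 - p.2| ^ (-(1 + γ)) * (DD Φ p * DD G p)) (P.prod P) := by
    rw [muM_eq, integrable_withDensity_iff_integrable_smul' (measurable_wtE γ) hwtlt] at hprodint
    simpa [hwt] using hprodint
  have hmu : ∫ p, DD Φ p * DD G p ∂(muM γ) =
      ∫ p, |p.1 - p.2| ^ (-(1 + γ)) * (DD Φ p * DD G p) ∂(P.prod P) := by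
    rw [muM_eq, integral_withDensity_eq_integral_toReal_smul (measurable_wtE γ) hwtlt]
    simp [hwt, hP]
  have hR : Tendsto (fun n => ∫ p, Q (e n) p ∂(P.prod P)) atTop
      (nhds (∫ p, |p.1 - p.2| ^ (-(1 + γ)) * (DD Φ p * DD G p) ∂(P.prod P))) := by
    refine tendsto_integral_of_dominated_convergence _
      (fun n => (hQm _).aestronglyMeasurable) hQint.norm ?_ ?_
    · intro n
      refine Eventually.of_forall fun p => ?_
      simp only [hQ]
      split_ifs
      · rw [mul_comm]
      · simp only [norm_zero]; positivity
    · refine Eventually.of_forall fun p => ?_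
      rcases eq_or_ne p.1 p.2 with hpp | hne
      · have : ∀ ε, Q ε p = |p.1 - p.2| ^ (-(1 + γ)) * (DD Φ p * DD G p) := by
          intro ε; simp [hQ, DD, hpp]
        simp_rw [this]; exact tendsto_const_nhds
      · have hp : 0 < |p.1 - p.2| := abs_pos.2 (sub_ne_zero.2 hne)
        apply tendsto_const_nhds.congr'
        filter_upwards [helim.eventually (Iio_mem_nhds hp)] with n hn
        simp only [hQ]
        rw [if_pos (le_of_lt hn), mul_comm]
  have hL' := hL
  simp_rw [fun n => hsym (e n) (hepos n)] at hL'
  rw [hmu]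
  exact tendsto_nhds_unique hL' (hR.const_mul _)

lemma inner_toLp {m : Measure (ℝ × ℝ)} {f g : ℝ × ℝ → ℝ} (hf : MemLp f 2 m) (hg : MemLp g 2 m) :
    inner ℝ (hg.toLp g) (hf.toLp f) = ∫ p, f p * g p ∂m := by
  rw [L2.inner_def]
  apply integral_congr_ae
  filter_upwards [hf.coeFn_toLp, hg.coeFn_toLp] with p h1 h2
  rw [h1, h2]; simp

lemma weak_iff_orth {γ : ℝ} (hγ : γ ∈ Set.Ioo (1:ℝ) 2) {Φ : ℝ → ℝ}
    (hΦ : Continuous Φ) (hm : MemLp (DD Φ) 2 (muM γ)) :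
    (∀ G, IsSpatialTest G → ∫ u in Set.Icc (0:ℝ) 1, Φ u * fracLap γ G u = 0) ↔
      hm.toLp _ ∈ (KK γ)ᗮ := by
  have hc := cGamma_pos hγ.1
  constructor
  · intro h
    unfold KK
    rw [Submodule.orthogonal_closure, Submodule.mem_orthogonal]
    rintro f ⟨G, hG, hfG⟩
    have hf : f = (hG.memLp hγ.2).toLp (DD G) := by
      apply Lp.ext
      exact hfG.trans (MemLp.coeFn_toLp _).symm
    rw [hf, inner_toLp hm]
    have := h G hG
    rw [ibp hγ hG hΦ hm] at this
    rcases mul_eq_zero.1 this with h1 | h1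
    · linarith
    · exact h1
  · intro h G hG
    rw [ibp hγ hG hΦ hm, ← inner_toLp hm (hG.memLp hγ.2),
      (Submodule.mem_orthogonal _ _).1 h _ (test_mem_KK hG _), mul_zero]


lemma sup_bound0 {γ : ℝ} (hγ : γ ∈ Set.Ioo (1:ℝ) 2) : ∃ C : ℝ, 0 ≤ C ∧ ∀ F : ℝ → ℝ, Continuous F →
    F 0 = 0 → ∀ f : Lp ℝ 2 (muM γ), f =ᵐ[muM γ] DD F → ∀ x ∈ Set.Icc (0:ℝ) 1, |F x| ≤ C * ‖f‖ := by
  obtain ⟨C, hC, h⟩ := sup_bound hγ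
  refine ⟨C, hC, fun F hF h0 f hf x hx => ?_⟩
  have hm : MemLp (DD F) 2 (muM γ) := (memLp_congr_ae hf).1 (Lp.memLp f)
  have he : hm.toLp (DD F) = f := Lp.ext (hm.coeFn_toLp.trans hf.symm)
  have := h F hF hm x hx 0 (by simp)
  rwa [h0, sub_zero, he] at this

lemma KK_rep {γ : ℝ} (hγ : γ ∈ Set.Ioo (1:ℝ) 2) {f : Lp ℝ 2 (muM γ)} (hf : f ∈ KK γ) :
    ∃ w : ℝ → ℝ, Continuous w ∧ (∀ x, x ∉ Set.Ioo (0:ℝ) 1 → w x = 0) ∧ f =ᵐ[muM γ] DD w := by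
  obtain ⟨C, hC, hsup⟩ := sup_bound0 hγ
  have hf' : f ∈ closure (TT γ : Set (Lp ℝ 2 (muM γ))) := hf
  obtain ⟨s, hs, hlim⟩ := mem_closure_iff_seq_limit.1 hf'
  choose G hG hGs using hs
  have hz : ∀ n x, x ∉ Set.Ioo (0:ℝ) 1 → G n x = 0 := fun n x hx => (hG n).zero_out hx
  have hkey : ∀ n m x, |G n x - G m x| ≤ C * dist (s n) (s m) := by
    intro n m x
    by_cases hx : x ∈ Set.Ioo (0:ℝ) 1
    · rw [dist_eq_norm]
      refine hsup (fun x => G n x - G m x) ((hG n).1.continuous.sub (hG m).1.continuous) ?_ _ ?_ x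
        (Set.Ioo_subset_Icc_self hx)
      · simp [hz]
      · filter_upwards [Lp.coeFn_sub (s n) (s m), hGs n, hGs m] with p h1 h2 h3
        rw [h1, Pi.sub_apply, h2, h3]; simp only [DD]; ring
    · rw [hz n x hx, hz m x hx]; simp; positivity
  have hcau := hlim.cauchySeq
  have hex : ∀ x, ∃ l, Tendsto (fun n => G n x) atTop (nhds l) := by
    intro x
    apply cauchySeq_tendsto_of_complete
    rw [Metric.cauchySeq_iff] at hcau ⊢
    intro ε hε
    obtain ⟨N, hN⟩ := hcau (ε / (C + 1)) (by positivity)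
    refine ⟨N, fun m hm n hn => ?_⟩
    rw [Real.dist_eq]
    have h1 := hN m hm n hn
    rw [lt_div_iff₀ (by positivity)] at h1
    have h2 := hkey m n x
    have h3 : 0 ≤ dist (s m) (s n) := dist_nonneg
    nlinarith
  choose w hw using hex
  have hb : ∀ n x, |G n x - w x| ≤ C * dist (s n) f := by
    intro n x
    refine le_of_tendsto_of_tendsto' ((tendsto_const_nhds.sub (hw x)).abs)
      ((tendsto_const_nhds.dist hlim).const_mul C) (fun m => hkey n m x)
  have hunif : TendstoUniformly G w atTop := by
    rw [Metric.tendstoUniformly_iff]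
    intro ε hε
    have h0 : Tendsto (fun n => C * dist (s n) f) atTop (nhds 0) := by
      simpa using ((tendsto_iff_dist_tendsto_zero.1 hlim).const_mul C)
    filter_upwards [h0.eventually (Iio_mem_nhds hε)] with n hn x
    rw [dist_comm, Real.dist_eq]
    exact (hb n x).trans_lt hn
  refine ⟨w, hunif.continuous (Frequently.of_forall fun n => (hG n).1.continuous), ?_, ?_⟩
  · intro x hx
    refine tendsto_nhds_unique (hw x) ?_
    simp_rw [fun n => hz n x hx]
    exact tendsto_const_nhds
  · obtain ⟨ns, hns, hae⟩ := (tendstoInMeasure_of_tendsto_Lp hlim).exists_seq_tendsto_ae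
    filter_upwards [hae, ae_all_iff.2 hGs] with p h1 h2
    refine tendsto_nhds_unique h1 ?_
    simp_rw [h2]
    exact ((hw p.1).sub (hw p.2)).comp hns.tendsto_atTop

/-- extension from `[0,1]` by constants -/
def ext01 (F : ℝ → ℝ) : ℝ → ℝ := fun x => F (max 0 (min 1 x))

lemma ext01_eq (F : ℝ → ℝ) {x : ℝ} (hx : x ∈ Set.Icc (0:ℝ) 1) : ext01 F x = F x := by
  unfold ext01; rw [min_eq_right hx.2, max_eq_right hx.1]

lemma ext01_cont {F : ℝ → ℝ} (hF : ContinuousOn F (Set.Icc 0 1)) : Continuous (ext01 F) := by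
  unfold ext01
  refine hF.comp_continuous (by fun_prop) (fun x => ⟨le_max_left _ _, ?_⟩)
  exact max_le zero_le_one (min_le_left _ _)

lemma ext01_ae (F : ℝ → ℝ) : ext01 F =ᵐ[volume.restrict (Set.Icc (0:ℝ) 1)] F := by
  filter_upwards [ae_restrict_mem measurableSet_Icc] with x hx using ext01_eq F hx

lemma density2 {γ : ℝ} (hγ : γ ∈ Set.Ioo (1:ℝ) 2) {F : ℝ → ℝ} (hF : Continuous F) (h0 : F 0 = 0)
    (h1 : F 1 = 0) (hm : MemLp (DD F) 2 (muM γ)) : hm.toLp _ ∈ KK γ := by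
  have hae := pp_ae _ _ γ (ext01_ae F)
  have hm' : MemLp (DD (ext01 F)) 2 (muM γ) := (memLp_congr_ae hae).2 hm
  have := density hγ (ext01_cont hF.continuousOn) ?_ hm'
  · rwa [(MemLp.toLp_eq_toLp_iff hm' hm).2 hae] at this
  · intro x hx
    unfold ext01
    rcases le_or_gt x 0 with h | h
    · rw [max_eq_left ((min_le_right _ _).trans h), h0]
    · have : 1 ≤ x := by
        by_contra hc; exact hx ⟨h, not_le.1 hc⟩
      rw [min_eq_left this, max_eq_right zero_le_one, h1]

lemma zero_of_norm {γ : ℝ} (hγ : γ ∈ Set.Ioo (1:ℝ) 2) {F : ℝ → ℝ} (hF : Continuous F) (h0 : F 0 = 0)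
    (hm : MemLp (DD F) 2 (muM γ)) (h : hm.toLp _ = 0) : ∀ x ∈ Set.Icc (0:ℝ) 1, F x = 0 := by
  obtain ⟨C, hC, hsup⟩ := sup_bound0 hγ
  intro x hx
  have := hsup F hF h0 _ hm.coeFn_toLp x hx
  rw [h, norm_zero, mul_zero] at this
  exact abs_nonpos_iff.1 this

lemma zero_of_orth {γ : ℝ} (hγ : γ ∈ Set.Ioo (1:ℝ) 2) {F : ℝ → ℝ} (hF : Continuous F) (h0 : F 0 = 0)
    (h1 : F 1 = 0) (hm : MemLp (DD F) 2 (muM γ)) (h : hm.toLp _ ∈ (KK γ)ᗮ) :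
    ∀ x ∈ Set.Icc (0:ℝ) 1, F x = 0 := by
  refine zero_of_norm hγ hF h0 hm ?_
  have := (Submodule.mem_orthogonal _ _).1 h _ (density2 hγ hF h0 h1 hm)
  exact inner_self_eq_zero.1 this

lemma max_principle {γ : ℝ} (hγ : γ ∈ Set.Ioo (1:ℝ) 2) {Φ : ℝ → ℝ} (hΦ : Continuous Φ)
    (hm : MemLp (DD Φ) 2 (muM γ)) (h : hm.toLp _ ∈ (KK γ)ᗮ) :
    ∀ x ∈ Set.Icc (0:ℝ) 1, min (Φ 0) (Φ 1) ≤ Φ x ∧ Φ x ≤ max (Φ 0) (Φ 1) := by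
  set a := min (Φ 0) (Φ 1) with ha
  set b := max (Φ 0) (Φ 1) with hb
  have hab : a ≤ b := min_le_max
  set T : ℝ → ℝ := fun x => max a (min b (Φ x)) with hT
  have hTc : Continuous T := by fun_prop
  have hTle : ∀ p, |DD T p| ≤ |DD Φ p| := by
    intro p
    simp only [DD, hT]
    refine (abs_max_sub_max_le_max _ _ _ _).trans ?_
    rw [sub_self, abs_zero, max_eq_right (abs_nonneg _)]
    refine (abs_min_sub_min_le_max _ _ _ _).trans ?_
    rw [sub_self, abs_zero, max_eq_right (abs_nonneg _)]
  have hEN := EN_mono_abs (m := muM γ) hTle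
  have hTm : MemLp (DD T) 2 (muM γ) := by
    rw [memLp_iff_EN (DD_measurable hTc.measurable)]
    exact hEN.trans_lt ((memLp_iff_EN (DD_measurable hΦ.measurable)).1 hm)
  have hnorm : ‖hTm.toLp _‖ ^ 2 ≤ ‖hm.toLp _‖ ^ 2 := by
    rw [← norm_toLp_sq hTm, ← norm_toLp_sq hm] at hEN
    exact (ENNReal.ofReal_le_ofReal_iff (by positivity)).1 hEN
  have hqm : MemLp (DD (fun x => T x - Φ x)) 2 (muM γ) := by
    convert hTm.sub hm using 1
    ext p; simp only [DD, Pi.sub_apply]; ring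
  have hq : hqm.toLp _ = hTm.toLp _ - hm.toLp _ := by
    rw [← MemLp.toLp_sub]
    rw [MemLp.toLp_eq_toLp_iff]
    refine Eventually.of_forall fun p => ?_
    simp only [DD, Pi.sub_apply]; ring
  have hT0 : T 0 - Φ 0 = 0 := by
    simp only [hT]
    rw [min_eq_right (le_max_left _ _), max_eq_right (min_le_left _ _), sub_self]
  have hT1 : T 1 - Φ 1 = 0 := by
    simp only [hT]
    rw [min_eq_right (le_max_right _ _), max_eq_right (min_le_right _ _), sub_self]
  have hK : hqm.toLp _ ∈ KK γ := density2 hγ (hTc.sub hΦ) hT0 hT1 hqm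
  have horth := (Submodule.mem_orthogonal _ _).1 h _ hK
  have hzero : hqm.toLp _ = 0 := by
    have h1 : hTm.toLp _ = hqm.toLp _ + hm.toLp _ := by rw [hq]; abel
    have h2 := norm_add_sq_real (hqm.toLp _) (hm.toLp _)
    rw [← h1, horth] at h2
    have : ‖hqm.toLp _‖ ^ 2 ≤ 0 := by linarith
    exact norm_eq_zero.1 (pow_eq_zero_iff (two_ne_zero) |>.1 (le_antisymm this (by positivity)))
  intro x hx
  have := zero_of_norm hγ (hTc.sub hΦ) hT0 hqm hzero x hx
  have hTx : Φ x = T x := by simp only [Pi.sub_apply] at this; linarith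
  rw [hTx]
  exact ⟨le_max_left _ _, max_le hab (min_le_left _ _)⟩


/-- Existence and a.e. uniqueness of the weak solution of the stationary
fractional Dirichlet problem, together with the maximum principle for its continuous
representative. -/
theorem stationary_solution_exists_unique_max_principle
    (γ Φl Φr : ℝ) (hγ : γ ∈ Set.Ioo (1:ℝ) 2) :
    ∃ Φss : ℝ → ℝ, IsStationarySolution γ Φl Φr Φss ∧
      (∀ Ψ : ℝ → ℝ, IsStationarySolution γ Φl Φr Ψ →
        ∀ᵐ u ∂(volume.restrict (Set.Icc (0:ℝ) 1)), Ψ u = Φss u) ∧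
      (∀ Φc : ℝ → ℝ, ContinuousOn Φc (Set.Icc 0 1) →
        (∀ᵐ u ∂(volume.restrict (Set.Icc (0:ℝ) 1)), Φss u = Φc u) →
        ∀ u ∈ Set.Icc (0:ℝ) 1, min Φl Φr ≤ Φc u ∧ Φc u ≤ max Φl Φr) := by
  set l : ℝ → ℝ := fun u => Φl + (Φr - Φl) * u with hl
  have hlc : Continuous l := by fun_prop
  have hlm : MemLp (DD l) 2 (muM γ) := by
    rw [memLp_iff_EN (DD_measurable hlc.measurable)]
    refine EN_lip (L := |Φr - Φl|) hγ.2 hlc.measurable (fun u _ v _ => ?_)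
    rw [← abs_mul]
    apply le_of_eq
    congr 1
    simp only [hl]; ring
  obtain ⟨y, hy, z, hz, hyz⟩ := (KK γ).exists_add_mem_mem_orthogonal (hlm.toLp _)
  obtain ⟨w, hwc, hw0, hwy⟩ := KK_rep hγ hy
  set S : ℝ → ℝ := fun u => l u - w u with hS
  have hSc : Continuous S := hlc.sub hwc
  have hSz : z =ᵐ[muM γ] DD S := by
    have hz' : z = hlm.toLp _ - y := by rw [hyz]; abel
    rw [hz']
    filter_upwards [Lp.coeFn_sub (hlm.toLp _) y, hlm.coeFn_toLp, hwy] with p h1 h2 h3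
    rw [h1, Pi.sub_apply, h2, h3]; simp only [DD, hS]; ring
  have hSm : MemLp (DD S) 2 (muM γ) := (memLp_congr_ae hSz).1 (Lp.memLp z)
  have hSorth : hSm.toLp _ ∈ (KK γ)ᗮ := by
    have : hSm.toLp _ = z := Lp.ext (hSm.coeFn_toLp.trans hSz.symm)
    rwa [this]
  have hS0 : S 0 = Φl := by simp [hS, hl, hw0]
  have hS1 : S 1 = Φr := by simp [hS, hl, hw0]
  refine ⟨S, ⟨⟨hSc.measurable, ?_⟩, ⟨S, hSc.continuousOn, Eventually.of_forall fun _ => rfl, hS0, hS1⟩,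
    (weak_iff_orth hγ hSc hSm).2 hSorth⟩, ?_, ?_⟩
  · unfold sobNormSq
    refine ENNReal.add_lt_top.2 ⟨?_, ?_⟩
    · unfold l2NormSq
      have hi : IntegrableOn (fun u => S u ^ 2) (Set.Icc 0 1) :=
        (hSc.pow 2).continuousOn.integrableOn_compact isCompact_Icc
      exact hi.lintegral_lt_top
    · rw [fracSeminormSq_lt_iff hγ.1 hSc.measurable,
        ← memLp_iff_EN (DD_measurable hSc.measurable)]
      exact hSm
  · rintro Ψ ⟨⟨hΨm, hΨs⟩, ⟨Ψc, hΨc, hae, hb0, hb1⟩, hweak⟩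
    have hae2 : Ψ =ᵐ[volume.restrict (Set.Icc (0:ℝ) 1)] ext01 Ψc :=
      (show Ψ =ᵐ[volume.restrict (Set.Icc (0:ℝ) 1)] Ψc from hae).trans (ext01_ae Ψc).symm
    have hEc := ext01_cont hΨc
    have hDΨ : MemLp (DD Ψ) 2 (muM γ) := by
      rw [memLp_iff_EN (DD_measurable hΨm), ← fracSeminormSq_lt_iff hγ.1 hΨm]
      exact (ENNReal.add_lt_top.1 hΨs).2
    have hEm : MemLp (DD (ext01 Ψc)) 2 (muM γ) := (memLp_congr_ae (pp_ae _ _ γ hae2)).1 hDΨ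
    have hEorth := (weak_iff_orth hγ hEc hEm).1 (by
      intro G hG
      refine Eq.trans (integral_congr_ae ?_) (hweak G hG)
      filter_upwards [hae2] with u hu
      rw [hu])
    have hdm : MemLp (DD (fun x => ext01 Ψc x - S x)) 2 (muM γ) := by
      convert hEm.sub hSm using 1
      ext p; simp only [DD, Pi.sub_apply]; ring
    have hd : hdm.toLp _ = hEm.toLp _ - hSm.toLp _ := by
      rw [← MemLp.toLp_sub, MemLp.toLp_eq_toLp_iff]
      refine Eventually.of_forall fun p => ?_
      simp only [DD, Pi.sub_apply]; ring
    have hzero := zero_of_orth (F := fun x => ext01 Ψc x - S x) hγ (hEc.sub hSc)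
      (by rw [ext01_eq Ψc (by simp), hb0, hS0, sub_self])
      (by rw [ext01_eq Ψc (by simp), hb1, hS1, sub_self]) hdm
      (by rw [hd]; exact Submodule.sub_mem _ hEorth hSorth)
    filter_upwards [hae2, ae_restrict_mem measurableSet_Icc] with u hu hui
    rw [hu]
    exact sub_eq_zero.1 (hzero u hui)
  · intro Φc hc hae u hu
    have heq := Measure.eqOn_Icc_of_ae_eq volume (zero_ne_one' ℝ) hae hSc.continuousOn hc
    rw [← heq hu]
    have := max_principle hγ hSc hSm hSorth u hu
    rwa [hS0, hS1] at this
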